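/- Let u(y,t) = ∫_{ℝⁿ} K(y,z,t) u₀(z) dz, where K is the Euclidean heat kernel on ℝⁿ and u₀ : ℝⁿ → ℝ is continuous, compactly supported, nonnegative, and not identically zero. Fix x₀ ∈ ℝⁿ and t₀ > 0; for 0 < t < t₀ write τ = t₀ - t and Ĥ(y,t) = (4πτ)^{-n/2} exp(-‖x₀-y‖²/(4τ)); for r > 0 define E_r = { (y,t) : 0 < t < t₀, Ĥ(y,t) ≥ r^{-n} } and ψ_r = log Ĥ + n log r. Let Q(y,t) = t² u(y,t)( Δ log u(y,t) + n/(2t) ) and I(r) = r^{-n} ∫_{E_r} ‖∇ψ_r‖² Q dy dt. Then for all 0 < r₁ ≤ r₂ with r₂² < 4π t₀: (i) I(r₂) ≤ I(r₁); and (ii) t₀² u(x₀,t₀)( Δ log u(x₀,t₀) + n/(2t₀) ) ≥ I(r₂). -/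

import Mathlib

open Real MeasureTheory Filter Set

/-- The Euclidean heat kernel on ℝⁿ. -/
noncomputable def heatK (n : ℕ) (x y : EuclideanSpace ℝ (Fin n)) (t : ℝ) : ℝ :=
  (4 * π * t) ^ (-(n : ℝ) / 2) * Real.exp (-‖x - y‖ ^ 2 / (4 * t))

/-- `i`-th partial derivative of `f : ℝⁿ → ℝ`. -/
noncomputable def pdv {n : ℕ} (i : Fin n) (f : EuclideanSpace ℝ (Fin n) → ℝ)
    (y : EuclideanSpace ℝ (Fin n)) : ℝ :=
  fderiv ℝ f y (EuclideanSpace.single i 1)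

/-- Euclidean Laplacian (trace of the Hessian) of `f : ℝⁿ → ℝ`. -/
noncomputable def lap {n : ℕ} (f : EuclideanSpace ℝ (Fin n) → ℝ)
    (y : EuclideanSpace ℝ (Fin n)) : ℝ :=
  ∑ i, pdv i (pdv i f) y

/-
Write `ψ_r` for the logarithm of the backward heat kernel plus `d log r`, and weight the heat ball
`{ψ_r ≥ 0}` by `ω(ψ_r)` with `ω(s) = e^s - 1 - s`. Since `e^ψ` solves the backward heat equation,
`(∂/∂t + Δ) ω(ψ) = ‖∇ψ‖²`, and `ω(ψ)` vanishes to first order on the boundary. Integrating by parts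
on the part of the heat ball up to time `T`, and letting `T → t₀`, where `r ^ (-d) ω(ψ_r)`
concentrates at `x₀` with mass one, gives
`F(x₀, t₀) - r ^ (-d) ∫ ‖∇ψ_r‖² F = r ^ (-d) ∫ ω(ψ_r) (∂/∂t - Δ) F`,
the last integral being a limit over `T`. If `(∂/∂t - Δ) F ≥ 0`, the right-hand side is nonnegative
and, because `r ^ (-d) ω(ψ_r)` is nondecreasing in `r`, it is nondecreasing in `r`.

For the Li–Yau quantity no Bochner formula is needed. With the initial point `z` distributed
according to the density `K(x, z, t) u₀(z)`, it is one quarter of the variance of `z`. Variance is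
the minimum over `c` of the second moment about `c`, and for fixed `c` that moment solves the heat
equation; so at each point the quantity is touched from above by a solution of the heat equation.
-/

open Laplacian InnerProductSpace
open scoped Topology ContDiff Gradient NNReal

section PartialDerivative

variable {P V : Type*} [NormedAddCommGroup P] [NormedSpace ℝ P] [NormedAddCommGroup V]
  [NormedSpace ℝ V]

theorem fderiv_comp_prodMk_left {k : P × V → ℝ} {p : P} {z : V}
    (hk : DifferentiableAt ℝ k (p, z)) :
    fderiv ℝ (fun q => k (q, z)) p = (fderiv ℝ k (p, z)).comp (ContinuousLinearMap.inl ℝ P V) :=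
  (hk.hasFDerivAt.comp p (hasFDerivAt_prodMk_left p z)).fderiv

theorem contDiffOn_fderiv_comp_prodMk_left {m : ℕ∞} {k : P × V → ℝ} {U : Set (P × V)}
    (hU : IsOpen U) (hk : ContDiffOn ℝ (m + 1) k U) :
    ContDiffOn ℝ m (fun q : P × V => fderiv ℝ (fun p => k (p, q.2)) q.1) U :=
  ((hk.fderiv_of_isOpen hU le_rfl).clm_comp
    (contDiffOn_const (c := ContinuousLinearMap.inl ℝ P V))).congr fun _ hq =>
      fderiv_comp_prodMk_left ((hk.contDiffAt (hU.mem_nhds hq)).differentiableAt (by simp))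

end PartialDerivative

section ParametricIntegral

variable {P V : Type*} [NormedAddCommGroup P] [NormedSpace ℝ P]
  [NormedAddCommGroup V] [InnerProductSpace ℝ V] [FiniteDimensional ℝ V] [MeasurableSpace V]
  [BorelSpace V]

-- A bump function equal to `1` on the support of `f` turns the integral into a convolution at `0`.
theorem contDiffOn_integral_smul {W : Type*} [NormedAddCommGroup W] [NormedSpace ℝ W]
    {m : ℕ∞} {k : P × V → ℝ} {s : Set P} {f : V → W} (hs : IsOpen s)
    (hk : ContDiffOn ℝ m k (s ×ˢ univ)) (hf : Continuous f) (hfs : HasCompactSupport f) :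
    ContDiffOn ℝ m (fun p => ∫ z, k (p, z) • f z) s := by
  obtain ⟨R, hR⟩ := hfs.isCompact.isBounded.subset_closedBall (0 : V)
  let χ : ContDiffBump (0 : V) := ⟨max R 1, max R 1 + 1, by positivity, by linarith⟩
  have hconv := contDiffOn_convolution_right_with_param (μ := (volume : Measure V)) (f := f)
    (ContinuousLinearMap.lsmul ℝ ℝ).flip (g := fun p z => k (p, -z) * χ (-z))
    (k := Metric.closedBall 0 (max R 1 + 1)) (n := m) hs (isCompact_closedBall _ _)
    (fun p z _ hz => by
      rw [χ.zero_of_le_dist (by simpa using (not_le.1 (mt mem_closedBall_zero_iff.2 hz)).le),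
        mul_zero])
    hf.locallyIntegrable
    ((hk.comp (f := fun q : P × V => (q.1, -q.2)) (by fun_prop) fun q hq => ⟨hq.1, mem_univ _⟩).mul
      ((χ.contDiff.comp contDiff_neg).comp contDiff_snd).contDiffOn)
  have hslice : ContDiffOn ℝ m (fun p : P => (p, (0 : V))) s := by fun_prop
  refine (hconv.comp hslice fun p hp => ⟨hp, mem_univ _⟩).congr fun p _ => ?_
  simp only [convolution_def, Function.comp_apply, ContinuousLinearMap.flip_apply,
    ContinuousLinearMap.lsmul_apply, zero_sub, neg_neg]
  refine integral_congr_ae (Eventually.of_forall fun z => ?_)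
  by_cases hz : z ∈ tsupport f
  · have hχ : χ z = 1 :=
      χ.one_of_mem_closedBall (Metric.closedBall_subset_closedBall (le_max_left _ _) (hR hz))
    simp only [hχ, mul_one]
  · simp only [image_eq_zero_of_notMem_tsupport hz, smul_zero]

variable [LocallyCompactSpace P]

theorem hasFDerivAt_integral_smul {k : P × V → ℝ} {s : Set P} {f : V → ℝ} {p : P}
    (hs : IsOpen s) (hk : ContDiffOn ℝ 1 k (s ×ˢ univ)) (hf : Continuous f)
    (hfs : HasCompactSupport f) (hp : p ∈ s) :
    HasFDerivAt (fun p => ∫ z, k (p, z) • f z)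
      (∫ z, f z • fderiv ℝ (fun q => k (q, z)) p) p := by
  have hslice (q : P) (hq : q ∈ s) : Continuous fun z => k (q, z) :=
    hk.continuousOn.comp_continuous (Continuous.prodMk_right q) fun z => ⟨hq, mem_univ _⟩
  have hdiff (q : P) (hq : q ∈ s) (z : V) : DifferentiableAt ℝ (fun q => k (q, z)) q :=
    ((hk.contDiffAt ((hs.prod isOpen_univ).mem_nhds ⟨hq, mem_univ z⟩)).differentiableAt
      one_ne_zero).comp q (hasFDerivAt_prodMk_left q z).differentiableAt
  have hcont : ContinuousOn (fun q : P × V => f q.2 • fderiv ℝ (fun p => k (p, q.2)) q.1)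
      (s ×ˢ univ) :=
    (hf.comp continuous_snd).continuousOn.smul
      (contDiffOn_fderiv_comp_prodMk_left (m := 0) (hs.prod isOpen_univ)
        (by simpa using hk)).continuousOn
  obtain ⟨K, hK, hKs, hKc⟩ := LocallyCompactSpace.local_compact_nhds p s (hs.mem_nhds hp)
  obtain ⟨C, hC⟩ := (hKc.prod hfs.isCompact).exists_bound_of_continuousOn
    (hcont.mono (prod_mono hKs (subset_univ _)))
  refine hasFDerivAt_integral_of_dominated_of_fderiv_le
    (F' := fun q z => f z • fderiv ℝ (fun q => k (q, z)) q)
    (bound := (tsupport f).indicator fun _ => C) hK ?_ ?_ ?_ ?_ ?_ ?_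
  · filter_upwards [hs.mem_nhds hp] with q hq
    exact ((hslice q hq).smul hf).aestronglyMeasurable
  · exact ((hslice p hp).smul hf).integrable_of_hasCompactSupport hfs.smul_left
  · exact (hcont.comp_continuous (Continuous.prodMk_right p)
      fun z => ⟨hp, mem_univ _⟩).aestronglyMeasurable
  · refine Eventually.of_forall fun z q hq => ?_
    by_cases hz : z ∈ tsupport f
    · rw [indicator_of_mem hz]
      exact hC (q, z) ⟨hq, hz⟩
    · rw [indicator_of_notMem hz, image_eq_zero_of_notMem_tsupport hz, zero_smul, norm_zero]
  · exact (integrable_indicator_iff hfs.isCompact.measurableSet).2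
      (integrableOn_const hfs.isCompact.measure_lt_top.ne)
  · refine Eventually.of_forall fun z q hq => ?_
    simpa only [smul_eq_mul] using (hdiff q (hKs hq) z).hasFDerivAt.mul_const (f z)

theorem fderiv_integral_smul_apply {k : P × V → ℝ} {s : Set P} {f : V → ℝ} {p : P}
    (hs : IsOpen s) (hk : ContDiffOn ℝ 1 k (s ×ˢ univ)) (hf : Continuous f)
    (hfs : HasCompactSupport f) (hp : p ∈ s) (v : P) :
    fderiv ℝ (fun p => ∫ z, k (p, z) • f z) p v
      = ∫ z, fderiv ℝ (fun q => k (q, z)) p v • f z := by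
  have hcont : Continuous fun z => f z • fderiv ℝ (fun q => k (q, z)) p :=
    hf.smul ((contDiffOn_fderiv_comp_prodMk_left (m := 0) (hs.prod isOpen_univ)
      (by simpa using hk)).continuousOn.comp_continuous (Continuous.prodMk_right p)
        fun z => ⟨hp, mem_univ _⟩)
  rw [(hasFDerivAt_integral_smul hs hk hf hfs hp).fderiv, ContinuousLinearMap.integral_apply
    (hcont.integrable_of_hasCompactSupport hfs.smul_right)]
  simp only [smul_apply, smul_eq_mul, mul_comm]

theorem deriv_integral_smul {k : ℝ × V → ℝ} {s : Set ℝ} {f : V → ℝ} {t : ℝ}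
    (hs : IsOpen s) (hk : ContDiffOn ℝ 1 k (s ×ˢ univ)) (hf : Continuous f)
    (hfs : HasCompactSupport f) (ht : t ∈ s) :
    deriv (fun t => ∫ z, k (t, z) • f z) t = ∫ z, deriv (fun t => k (t, z)) t • f z := by
  simpa only [fderiv_apply_one_eq_deriv] using fderiv_integral_smul_apply hs hk hf hfs ht 1

end ParametricIntegral

section Laplacian

variable {V : Type*} [NormedAddCommGroup V] [InnerProductSpace ℝ V] [FiniteDimensional ℝ V]

theorem laplacian_eq_sum_fderiv_fderiv {ι : Type*} [Fintype ι] (b : OrthonormalBasis ι ℝ V)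
    {f : V → ℝ} {x : V} (hf : ContDiffAt ℝ 2 f x) :
    Δ f x = ∑ i, fderiv ℝ (fun y => fderiv ℝ f y (b i)) x (b i) := by
  have hd : DifferentiableAt ℝ (fderiv ℝ f) x :=
    (hf.fderiv_right (m := 1) (by norm_num)).differentiableAt one_ne_zero
  simp only [laplacian_eq_iteratedFDeriv_orthonormalBasis f b, iteratedFDeriv_two_apply,
    fderiv_clm_apply hd (differentiableAt_const _)]
  simp

theorem laplacian_integral_smul [MeasurableSpace V] [BorelSpace V] {E : Type*}
    [NormedAddCommGroup E] [InnerProductSpace ℝ E] [FiniteDimensional ℝ E] {k : E × V → ℝ}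
    {f : V → ℝ} (hk : ContDiff ℝ 2 k) (hf : Continuous f) (hfs : HasCompactSupport f) (x : E) :
    Δ (fun x => ∫ z, k (x, z) • f z) x = ∫ z, Δ (fun x => k (x, z)) x • f z := by
  let b := stdOrthonormalBasis ℝ E
  have hk₂ : ContDiffOn ℝ 2 k (univ ×ˢ univ) := hk.contDiffOn
  have hk₁ (v : E) : ContDiffOn ℝ 1 (fun q : E × V => fderiv ℝ (fun x => k (x, q.2)) q.1 v)
      (univ ×ˢ univ) :=
    (contDiffOn_fderiv_comp_prodMk_left (m := 1) (isOpen_univ.prod isOpen_univ)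
      (hk₂.of_le (by norm_num))).clm_apply contDiffOn_const
  have hk₀ (v : E) : Continuous fun z => fderiv ℝ (fun y => fderiv ℝ (fun x => k (x, z)) y v) x v :=
    ((contDiffOn_fderiv_comp_prodMk_left (m := 0) (isOpen_univ.prod isOpen_univ)
      (by simpa using hk₁ v)).clm_apply contDiffOn_const).continuousOn.comp_continuous
        (Continuous.prodMk_right x) fun _ => ⟨mem_univ _, mem_univ _⟩
  have hint : ContDiffAt ℝ 2 (fun x => ∫ z, k (x, z) • f z) x :=
    (contDiffOn_integral_smul isOpen_univ (m := 2) hk₂ hf hfs).contDiffAt univ_mem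
  have hslice (z : V) : ContDiffAt ℝ 2 (fun x => k (x, z)) x := by fun_prop
  simp only [laplacian_eq_sum_fderiv_fderiv b hint, laplacian_eq_sum_fderiv_fderiv b (hslice _),
    Finset.sum_smul]
  rw [integral_finsetSum Finset.univ (f := fun i z =>
      fderiv ℝ (fun y => fderiv ℝ (fun x => k (x, z)) y (b i)) x (b i) • f z) fun i _ =>
    ((hk₀ (b i)).smul hf).integrable_of_hasCompactSupport hfs.smul_left]
  refine Finset.sum_congr rfl fun i _ => ?_
  simp only [fderiv_integral_smul_apply isOpen_univ (hk₂.of_le one_le_two) hf hfs (mem_univ _)]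
  exact fderiv_integral_smul_apply isOpen_univ (hk₁ (b i)) hf hfs (mem_univ x) (b i)

end Laplacian

section LaplacianCalculus

variable {V : Type*} [NormedAddCommGroup V] [InnerProductSpace ℝ V] [FiniteDimensional ℝ V]

theorem laplacian_comp_sub (f : V → ℝ) (a x : V) : Δ (fun y => f (y - a)) x = Δ f (x - a) := by
  simp only [laplacian_eq_iteratedFDeriv_stdOrthonormalBasis, iteratedFDeriv_comp_sub]

theorem laplacian_comp {h : ℝ → ℝ} {u : V → ℝ} {x : V} (hh : ContDiffAt ℝ 2 h (u x))
    (hu : ContDiffAt ℝ 2 u x) :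
    Δ (fun y => h (u y)) x
      = deriv h (u x) * Δ u x + deriv (deriv h) (u x) * ‖∇ u x‖ ^ 2 := by
  let b := stdOrthonormalBasis ℝ V
  have hdh : DifferentiableAt ℝ (deriv h) (u x) :=
    (hh.derivWithin (m := 1) (by norm_num)).differentiableAt one_ne_zero
  have hdu (v : V) : DifferentiableAt ℝ (fun y => fderiv ℝ u y v) x :=
    ((hu.fderiv_right (m := 1) (by norm_num)).clm_apply contDiffAt_const).differentiableAt
      one_ne_zero
  have hchain (v : V) : (fun y => fderiv ℝ (fun y => h (u y)) y v)
      =ᶠ[𝓝 x] fun y => deriv h (u y) * fderiv ℝ u y v := by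
    filter_upwards [hu.eventually (by simp), hu.continuousAt.eventually (hh.eventually (by simp))]
      with y hy hhy
    have hcomp : HasFDerivAt (fun y => h (u y)) (deriv h (u y) • fderiv ℝ u y) y :=
      (hhy.differentiableAt two_ne_zero).hasDerivAt.comp_hasFDerivAt y
        (hy.differentiableAt two_ne_zero).hasFDerivAt
    simp only [hcomp.fderiv, smul_apply, smul_eq_mul]
  have hsecond (v : V) : fderiv ℝ (fun y => fderiv ℝ (fun y => h (u y)) y v) x v
      = deriv h (u x) * fderiv ℝ (fun y => fderiv ℝ u y v) x v
        + deriv (deriv h) (u x) * inner ℝ (∇ u x) v ^ 2 := by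
    have houter : HasFDerivAt (fun y => deriv h (u y)) (deriv (deriv h) (u x) • fderiv ℝ u x) x :=
      hdh.hasDerivAt.comp_hasFDerivAt x (hu.differentiableAt two_ne_zero).hasFDerivAt
    rw [(hchain v).fderiv_eq, (houter.fun_mul (hdu v).hasFDerivAt).fderiv, inner_gradient_left]
    simp only [add_apply, smul_apply, smul_eq_mul]
    ring
  rw [laplacian_eq_sum_fderiv_fderiv b (hh.fun_comp x hu), laplacian_eq_sum_fderiv_fderiv b hu,
    ← b.sum_sq_inner_left, Finset.mul_sum, Finset.mul_sum, ← Finset.sum_add_distrib]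
  exact Finset.sum_congr rfl fun i _ => hsecond (b i)

-- A negative second derivative would make `a` a local maximum too, hence `g` constant near `a`.
theorem deriv_deriv_nonneg_of_isLocalMin {g : ℝ → ℝ} {a : ℝ} (hg : IsLocalMin g a)
    (hc : ContinuousAt g a) : 0 ≤ deriv (deriv g) a := by
  by_contra! hneg
  have hmax : IsLocalMax g a := isLocalMax_of_deriv_deriv_neg hneg hg.deriv_eq_zero hc
  have hconst : g =ᶠ[𝓝 a] fun _ => g a := by
    filter_upwards [hg, hmax] with s hmin hmax using le_antisymm hmax hmin
  have hzero : deriv (deriv g) a = 0 := by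
    rw [hconst.deriv.deriv_eq]
    simp
  exact hneg.ne hzero

theorem laplacian_nonneg_of_isLocalMin {f : V → ℝ} {x : V} (hf : IsLocalMin f x)
    (hC : ContDiffAt ℝ 2 f x) : 0 ≤ Δ f x := by
  let b := stdOrthonormalBasis ℝ V
  rw [laplacian_eq_sum_fderiv_fderiv b hC]
  refine Finset.sum_nonneg fun i _ => ?_
  let l : ℝ → V := fun s => x + s • b i
  have hl0 : l 0 = x := by simp [l]
  have hl (s : ℝ) : HasDerivAt l (b i) s := by
    simpa only [one_smul] using ((hasDerivAt_id' s).smul_const (b i)).const_add x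
  have hlt : Tendsto l (𝓝 0) (𝓝 x) := hl0 ▸ (hl 0).continuousAt.tendsto
  have hmin : IsLocalMin (fun s => f (l s)) 0 := by
    simpa only [IsLocalMin, IsMinFilter, hl0] using hlt.eventually hf
  have hfirst : deriv (fun s => f (l s)) =ᶠ[𝓝 0] fun s => fderiv ℝ f (l s) (b i) := by
    filter_upwards [hlt.eventually (hC.eventually (by simp))] with s hs
    exact ((hs.differentiableAt two_ne_zero).hasFDerivAt.comp_hasDerivAt s (hl s)).deriv
  have hd : DifferentiableAt ℝ (fun y => fderiv ℝ f y (b i)) (l 0) := by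
    rw [hl0]
    exact ((hC.fderiv_right (m := 1) (by norm_num)).clm_apply contDiffAt_const).differentiableAt
      one_ne_zero
  have hsecond : deriv (deriv fun s => f (l s)) 0
      = fderiv ℝ (fun y => fderiv ℝ f y (b i)) x (b i) := by
    rw [hfirst.deriv_eq, ← hl0]
    exact (hd.hasFDerivAt.comp_hasDerivAt 0 (hl 0)).deriv
  rw [← hsecond]
  exact deriv_deriv_nonneg_of_isLocalMin hmin
    (hC.continuousAt.comp_of_eq (hl 0).continuousAt hl0)

theorem continuous_laplacian {u : V → ℝ} (hu : ContDiff ℝ 2 u) : Continuous (Δ u) := by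
  rw [show Δ u = _ from
    funext fun _ => laplacian_eq_sum_fderiv_fderiv (stdOrthonormalBasis ℝ V) hu.contDiffAt]
  exact continuous_finsetSum _ fun i _ => (((hu.fderiv_right (m := 1) (by norm_num)).clm_apply
    contDiff_const).continuous_fderiv one_ne_zero).clm_apply continuous_const

theorem sum_fderiv_mul_fderiv_sub {ι : Type*} [Fintype ι] (b : OrthonormalBasis ι ℝ V)
    {v u : V → ℝ} {y : V} (hv : ContDiffAt ℝ 2 v y) (hu : ContDiffAt ℝ 2 u y) :
    ∑ i, fderiv ℝ (fun y => v y * fderiv ℝ u y (b i) - u y * fderiv ℝ v y (b i)) y (b i)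
      = v y * Δ u y - u y * Δ v y := by
  have hpart {w : V → ℝ} (hw : ContDiffAt ℝ 2 w y) (e : V) :=
    (((hw.fderiv_right (m := 1) (by norm_num)).clm_apply
      (contDiffAt_const (c := e))).differentiableAt one_ne_zero).hasFDerivAt
  have hdv := (hv.differentiableAt two_ne_zero).hasFDerivAt
  have hdu := (hu.differentiableAt two_ne_zero).hasFDerivAt
  rw [laplacian_eq_sum_fderiv_fderiv b hu, laplacian_eq_sum_fderiv_fderiv b hv, Finset.mul_sum,
    Finset.mul_sum, ← Finset.sum_sub_distrib]
  refine Finset.sum_congr rfl fun i _ => ?_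
  rw [((hdv.fun_mul (hpart hu (b i))).fun_sub (hdu.fun_mul (hpart hv (b i)))).fderiv]
  simp only [sub_apply, add_apply, smul_apply, smul_eq_mul]
  ring

end LaplacianCalculus

section Green

theorem lipschitzWith_indicator_closedBall {E : Type*} [NormedAddCommGroup E] [NormedSpace ℝ E]
    {X : E → ℝ} {x₀ : E} {R : ℝ} {C : ℝ≥0} (hX : LipschitzOnWith C X (Metric.closedBall x₀ R))
    (hS : ∀ y ∈ Metric.sphere x₀ R, X y = 0) :
    LipschitzWith C ((Metric.closedBall x₀ R).indicator X) := by
  set B := Metric.closedBall x₀ R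
  have hcross (x : E) (hx : x ∈ B) (y : E) (hy : y ∉ B) : |X x| ≤ C * dist x y := by
    obtain ⟨p, hp, hpR⟩ := (convex_segment (𝕜 := ℝ) x y).isPreconnected.intermediate_value
      (left_mem_segment ℝ x y) (right_mem_segment ℝ x y) (f := fun z => dist z x₀) (by fun_prop)
      (show R ∈ Icc (dist x x₀) (dist y x₀) from ⟨hx, (not_le.1 hy).le⟩)
    calc |X x| = dist (X x) (X p) := by rw [hS p hpR, Real.dist_0_eq_abs]
      _ ≤ C * dist x p := hX.dist_le_mul x hx p (Metric.sphere_subset_closedBall hpR)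
      _ ≤ C * dist x y := by
        gcongr
        linarith [dist_add_dist_of_mem_segment hp, dist_nonneg (x := p) (y := y)]
  refine LipschitzWith.of_dist_le_mul fun x y => ?_
  by_cases hx : x ∈ B <;> by_cases hy : y ∈ B <;> simp only [indicator, hx, hy, if_true, if_false]
  · exact hX.dist_le_mul x hx y hy
  · simpa only [Real.dist_0_eq_abs] using hcross x hx y hy
  · simpa only [dist_comm, Real.dist_0_eq_abs] using hcross y hy x hx
  · simpa using by positivity

variable {V : Type*} [NormedAddCommGroup V] [InnerProductSpace ℝ V] [FiniteDimensional ℝ V]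
  [MeasurableSpace V] [BorelSpace V]

theorem integral_lineDeriv_eq_zero {f : V → ℝ} {C : ℝ≥0} (hf : LipschitzWith C f)
    (hfs : HasCompactSupport f) (v : V) : ∫ x, lineDeriv ℝ f x v = 0 := by
  simpa [lineDeriv] using (LipschitzWith.integral_lineDeriv_mul_eq (μ := volume)
    (LipschitzWith.const (1 : ℝ)) hf hfs (-v)).symm

variable [Nontrivial V] {x₀ : V} {R : ℝ}

theorem setIntegral_closedBall_fderiv_eq_zero {X : V → ℝ} (hX : ContDiff ℝ 1 X)
    (hS : ∀ y ∈ Metric.sphere x₀ R, X y = 0) (v : V) :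
    ∫ y in Metric.closedBall x₀ R, fderiv ℝ X y v = 0 := by
  set B := Metric.closedBall x₀ R
  have hBc : IsCompact B := isCompact_closedBall x₀ R
  obtain ⟨C, hC⟩ :=
    hX.locallyLipschitz.locallyLipschitzOn.exists_lipschitzOnWith_of_compact hBc
  have hderiv : B.indicator (fun y => fderiv ℝ X y v)
      =ᵐ[volume] fun y => lineDeriv ℝ (B.indicator X) y v := by
    filter_upwards [measure_eq_zero_iff_ae_notMem.1 (Measure.addHaar_sphere volume x₀ R)] with y hy
    by_cases hyB : y ∈ B
    · have hnhds : B ∈ 𝓝 y :=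
        Metric.closedBall_mem_nhds_of_mem (Metric.mem_ball.2 (lt_of_le_of_ne hyB hy))
      rw [indicator_of_mem hyB, (eqOn_indicator.eventuallyEq_of_mem hnhds).lineDeriv_eq,
        (hX.differentiable one_ne_zero y).lineDeriv_eq_fderiv]
    · have hzero : B.indicator X =ᶠ[𝓝 y] fun _ => 0 :=
        (eqOn_indicator' (s := B)).eventuallyEq_of_mem
          (Metric.isClosed_closedBall.isOpen_compl.mem_nhds hyB)
      rw [indicator_of_notMem hyB, hzero.lineDeriv_eq]
      simp [lineDeriv]
  rw [← integral_indicator Metric.isClosed_closedBall.measurableSet, integral_congr_ae hderiv]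
  exact integral_lineDeriv_eq_zero (lipschitzWith_indicator_closedBall hC hS)
    (HasCompactSupport.intro hBc fun x hx => indicator_of_notMem hx X) v

theorem setIntegral_closedBall_mul_laplacian {v u : V → ℝ} (hv : ContDiff ℝ 2 v)
    (hu : ContDiff ℝ 2 u) (hv₀ : ∀ y ∈ Metric.sphere x₀ R, v y = 0)
    (hv₁ : ∀ y ∈ Metric.sphere x₀ R, fderiv ℝ v y = 0) :
    ∫ y in Metric.closedBall x₀ R, v y * Δ u y = ∫ y in Metric.closedBall x₀ R, u y * Δ v y := by
  let b := stdOrthonormalBasis ℝ V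
  have hpart {w : V → ℝ} (hw : ContDiff ℝ 2 w) (e : V) : ContDiff ℝ 1 fun y => fderiv ℝ w y e :=
    (hw.fderiv_right (m := 1) (by norm_num)).clm_apply contDiff_const
  let X : Fin (Module.finrank ℝ V) → V → ℝ :=
    fun i y => v y * fderiv ℝ u y (b i) - u y * fderiv ℝ v y (b i)
  have hX (i) : ContDiff ℝ 1 (X i) :=
    ((hv.of_le one_le_two).mul (hpart hu (b i))).sub ((hu.of_le one_le_two).mul (hpart hv (b i)))
  have hX₀ (i) (y) (hy : y ∈ Metric.sphere x₀ R) : X i y = 0 := by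
    simp [X, hv₀ y hy, hv₁ y hy]
  have hint {g : V → ℝ} (hg : Continuous g) : IntegrableOn g (Metric.closedBall x₀ R) :=
    hg.continuousOn.integrableOn_compact (isCompact_closedBall x₀ R)
  refine sub_eq_zero.1 ((integral_sub (hint (hv.continuous.mul (continuous_laplacian hu)))
    (hint (hu.continuous.mul (continuous_laplacian hv)))).symm.trans ?_)
  calc ∫ y in Metric.closedBall x₀ R, (v y * Δ u y - u y * Δ v y)
      = ∫ y in Metric.closedBall x₀ R, ∑ i, fderiv ℝ (X i) y (b i) := by
        simp only [X, sum_fderiv_mul_fderiv_sub b hv.contDiffAt hu.contDiffAt]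
    _ = ∑ i, ∫ y in Metric.closedBall x₀ R, fderiv ℝ (X i) y (b i) :=
        integral_finsetSum _ fun i _ =>
          hint (((hX i).continuous_fderiv one_ne_zero).clm_apply continuous_const)
    _ = 0 := Finset.sum_eq_zero fun i _ =>
        setIntegral_closedBall_fderiv_eq_zero (hX i) (hX₀ i) (b i)

end Green

section HeatKernel

variable {V : Type*} [NormedAddCommGroup V] [InnerProductSpace ℝ V]

/-- The logarithm of the Euclidean heat kernel centered at the origin, as a function on space-time;
it is meaningful for positive times only. -/
noncomputable def logHeatKernel (p : V × ℝ) : ℝ :=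
  -(Module.finrank ℝ V / 2) * log (4 * π * p.2) - ‖p.1‖ ^ 2 / (4 * p.2)

/-- The heat kernel centered at the origin, as a function on space-time; it is meaningful for
positive times only. -/
noncomputable def heatKernel (p : V × ℝ) : ℝ := exp (logHeatKernel p)

theorem heatKernel_pos (p : V × ℝ) : 0 < heatKernel p := exp_pos _

theorem contDiffAt_logHeatKernel {m : ℕ∞} {p : V × ℝ} (hp : p.2 ≠ 0) :
    ContDiffAt ℝ m logHeatKernel p := by
  have hlog : 4 * π * p.2 ≠ 0 := by positivity
  have hden : 4 * p.2 ≠ 0 := by positivity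
  exact (contDiffAt_const.mul ((contDiffAt_const.mul contDiffAt_snd).log hlog)).sub
    ((contDiffAt_fst.norm_sq ℝ).div (contDiffAt_const.mul contDiffAt_snd) hden)

theorem contDiffAt_heatKernel {m : ℕ∞} {p : V × ℝ} (hp : p.2 ≠ 0) :
    ContDiffAt ℝ m heatKernel p :=
  (contDiffAt_logHeatKernel hp).exp

theorem hasDerivAt_logHeatKernel (x : V) {t : ℝ} (ht : t ≠ 0) :
    HasDerivAt (fun s => logHeatKernel (x, s))
      (‖x‖ ^ 2 / (4 * t ^ 2) - Module.finrank ℝ V / (2 * t)) t := by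
  have hlog : HasDerivAt (fun s => log (4 * π * s)) (4 * π * 1 / (4 * π * t)) t :=
    ((hasDerivAt_id' t).const_mul (4 * π)).log (by positivity)
  have hinv : HasDerivAt (fun s => ‖x‖ ^ 2 / (4 * s))
      ((0 * (4 * t) - ‖x‖ ^ 2 * (4 * 1)) / (4 * t) ^ 2) t :=
    (hasDerivAt_const t _).div ((hasDerivAt_id' t).const_mul 4) (by positivity)
  convert! (hlog.const_mul (-(Module.finrank ℝ V / 2 : ℝ))).sub hinv using 1
  field_simp
  ring

theorem hasDerivAt_heatKernel (x : V) {t : ℝ} (ht : t ≠ 0) :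
    HasDerivAt (fun s => heatKernel (x, s))
      ((‖x‖ ^ 2 / (4 * t ^ 2) - Module.finrank ℝ V / (2 * t)) * heatKernel (x, t)) t := by
  simpa only [heatKernel, mul_comm] using (hasDerivAt_logHeatKernel x ht).exp

theorem contDiff_logHeatKernel_slice {m : ℕ∞} {t : ℝ} (ht : t ≠ 0) :
    ContDiff ℝ m fun y : V => logHeatKernel (y, t) :=
  contDiff_iff_contDiffAt.2 fun y => ContDiffAt.comp y (g := logHeatKernel)
    (contDiffAt_logHeatKernel (p := (y, t)) ht) (contDiffAt_id.prodMk contDiffAt_const)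

theorem contDiff_heatKernel_slice {m : ℕ∞} {t : ℝ} (ht : t ≠ 0) :
    ContDiff ℝ m fun y : V => heatKernel (y, t) :=
  (contDiff_logHeatKernel_slice ht).exp

theorem contDiff_heatKernel_sub {m : ℕ∞} {t : ℝ} (ht : t ≠ 0) :
    ContDiff ℝ m fun q : V × V => heatKernel (q.1 - q.2, t) :=
  (contDiff_heatKernel_slice ht).comp (contDiff_fst.sub contDiff_snd)

theorem continuous_heatKernel_const_sub (x : V) {t : ℝ} (ht : t ≠ 0) :
    Continuous fun z => heatKernel (x - z, t) :=
  (contDiff_heatKernel_sub (m := 0) ht).continuous.comp (Continuous.prodMk_right x)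

variable [FiniteDimensional ℝ V]

theorem hasGradientAt_logHeatKernel (x : V) (t : ℝ) :
    HasGradientAt (fun y : V => logHeatKernel (y, t)) (-(2 * t)⁻¹ • x) x := by
  have hsq : HasFDerivAt (fun y : V => ‖y‖ ^ 2 / (4 * t)) ((4 * t)⁻¹ • 2 • innerSL ℝ x) x := by
    simpa only [div_eq_mul_inv] using
      (hasStrictFDerivAt_norm_sq x).hasFDerivAt.mul_const (4 * t)⁻¹
  rw [hasGradientAt_iff_hasFDerivAt]
  convert! hsq.const_sub (-(Module.finrank ℝ V / 2 : ℝ) * log (4 * π * t)) using 1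
  ext v
  simp only [toDual_apply_apply, inner_smul_left, neg_apply, smul_apply, innerSL_apply_apply,
    smul_eq_mul, nsmul_eq_mul, conj_trivial, mul_inv]
  push_cast
  ring

theorem hasGradientAt_heatKernel (x : V) (t : ℝ) :
    HasGradientAt (fun y : V => heatKernel (y, t)) (heatKernel (x, t) • -(2 * t)⁻¹ • x) x := by
  rw [hasGradientAt_iff_hasFDerivAt, map_smul]
  exact (hasGradientAt_logHeatKernel x t).hasFDerivAt.exp

theorem norm_sq_gradient_logHeatKernel (x : V) (t : ℝ) :
    ‖∇ (fun y : V => logHeatKernel (y, t)) x‖ ^ 2 = ‖x‖ ^ 2 / (4 * t ^ 2) := by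
  rw [(hasGradientAt_logHeatKernel x t).gradient, norm_smul, mul_pow, norm_neg, norm_inv,
    Real.norm_eq_abs, inv_pow, sq_abs]
  ring

theorem laplacian_logHeatKernel (x : V) {t : ℝ} (ht : t ≠ 0) :
    Δ (fun y : V => logHeatKernel (y, t)) x = -(Module.finrank ℝ V / (2 * t)) := by
  let b := stdOrthonormalBasis ℝ V
  have hsecond (v : V) : fderiv ℝ (fun y : V => inner ℝ (-(2 * t)⁻¹ • y) v) x v
      = -(2 * t)⁻¹ * ‖v‖ ^ 2 := by
    have h : HasFDerivAt (fun y : V => inner ℝ (-(2 * t)⁻¹ • y) v)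
        (-(2 * t)⁻¹ • innerSL ℝ v) x := by
      simpa only [inner_smul_left, conj_trivial, real_inner_comm, innerSL_apply_apply] using
        (innerSL ℝ v).hasFDerivAt.const_mul (-(2 * t)⁻¹) (x := x)
    simp only [h.fderiv, smul_apply, innerSL_apply_apply, real_inner_self_eq_norm_sq, smul_eq_mul]
  rw [laplacian_eq_sum_fderiv_fderiv b (contDiff_logHeatKernel_slice (m := 2) ht).contDiffAt]
  simp only [(hasGradientAt_logHeatKernel _ t).fderiv_apply, hsecond, b.norm_eq_one]
  simp
  ring

theorem laplacian_heatKernel (x : V) {t : ℝ} (ht : t ≠ 0) :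
    Δ (fun y : V => heatKernel (y, t)) x
      = (‖x‖ ^ 2 / (4 * t ^ 2) - Module.finrank ℝ V / (2 * t)) * heatKernel (x, t) := by
  unfold heatKernel
  rw [laplacian_comp contDiff_exp.contDiffAt
    (contDiff_logHeatKernel_slice (m := 2) ht).contDiffAt, norm_sq_gradient_logHeatKernel,
    laplacian_logHeatKernel x ht]
  simp only [Real.deriv_exp]
  ring

end HeatKernel

section HeatOperator

variable {V : Type*} [NormedAddCommGroup V] [InnerProductSpace ℝ V]

theorem contDiff_slice_space {m : ℕ∞} {F : V × ℝ → ℝ} (hF : ContDiffOn ℝ m F (univ ×ˢ Ioi 0))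
    {t : ℝ} (ht : 0 < t) : ContDiff ℝ m fun y => F (y, t) :=
  contDiffOn_univ.1 (hF.comp (contDiff_prodMk_left t).contDiffOn fun _ _ => ⟨mem_univ _, ht⟩)

theorem contDiffOn_slice_time {m : ℕ∞} {F : V × ℝ → ℝ} (hF : ContDiffOn ℝ m F (univ ×ˢ Ioi 0))
    (x : V) : ContDiffOn ℝ m (fun t => F (x, t)) (Ioi 0) :=
  hF.comp (contDiff_prodMk_right x).contDiffOn fun _ ht => ⟨mem_univ _, ht⟩

theorem contDiffAt_slice_time {m : ℕ∞} {F : V × ℝ → ℝ} (hF : ContDiffOn ℝ m F (univ ×ˢ Ioi 0))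
    (x : V) {t : ℝ} (ht : 0 < t) : ContDiffAt ℝ m (fun t => F (x, t)) t :=
  (contDiffOn_slice_time hF x).contDiffAt (Ioi_mem_nhds ht)

theorem continuousOn_deriv_slice_time {F : V × ℝ → ℝ} (hF : ContDiffOn ℝ 1 F (univ ×ˢ Ioi 0)) :
    ContinuousOn (fun p : V × ℝ => deriv (fun t => F (p.1, t)) p.2) (univ ×ˢ Ioi 0) := by
  have ho : IsOpen (univ ×ˢ Ioi 0 : Set (V × ℝ)) := isOpen_univ.prod isOpen_Ioi
  refine ((hF.continuousOn_fderiv_of_isOpen ho le_rfl).clm_apply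
    (continuousOn_const (c := (0, 1)))).congr fun p hp => ?_
  exact (((hF.contDiffAt (ho.mem_nhds hp)).differentiableAt
    one_ne_zero).hasFDerivAt.comp_hasDerivAt p.2
      ((hasDerivAt_const p.2 p.1).prodMk (hasDerivAt_id p.2))).deriv

variable [FiniteDimensional ℝ V]

/-- The heat operator `∂/∂t - Δ` acting on functions on space-time. -/
noncomputable def heatOperator (F : V × ℝ → ℝ) (p : V × ℝ) : ℝ :=
  deriv (fun t => F (p.1, t)) p.2 - Δ (fun y => F (y, p.2)) p.1

theorem heatOperator_sub {F G : V × ℝ → ℝ} (hF : ContDiffOn ℝ 2 F (univ ×ˢ Ioi 0))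
    (hG : ContDiffOn ℝ 2 G (univ ×ˢ Ioi 0)) {p : V × ℝ} (hp : 0 < p.2) :
    heatOperator (fun q => F q - G q) p = heatOperator F p - heatOperator G p := by
  have htime {H : V × ℝ → ℝ} (hH : ContDiffOn ℝ 2 H (univ ×ˢ Ioi 0)) :
      DifferentiableAt ℝ (fun t => H (p.1, t)) p.2 :=
    (contDiffAt_slice_time (m := 2) hH p.1 hp).differentiableAt two_ne_zero
  have hspace : Δ (fun y => F (y, p.2) - G (y, p.2)) p.1
      = Δ (fun y => F (y, p.2)) p.1 - Δ (fun y => G (y, p.2)) p.1 :=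
    (contDiff_slice_space (m := 2) hF hp).contDiffAt.laplacian_sub
      (contDiff_slice_space (m := 2) hG hp).contDiffAt
  simp only [heatOperator, deriv_fun_sub (htime hF) (htime hG), hspace]
  ring

theorem heatOperator_nonpos_of_isLocalMin {F : V × ℝ → ℝ}
    (hF : ContDiffOn ℝ 2 F (univ ×ˢ Ioi 0)) {p : V × ℝ} (hp : 0 < p.2) (hmin : IsLocalMin F p) :
    heatOperator F p ≤ 0 := by
  have htime : IsLocalMin (fun t => F (p.1, t)) p.2 :=
    (Continuous.prodMk_right p.1).continuousAt.eventually hmin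
  have hspace : IsLocalMin (fun y => F (y, p.2)) p.1 :=
    (Continuous.prodMk_left p.2).continuousAt.eventually hmin
  rw [heatOperator, htime.deriv_eq_zero, zero_sub, neg_nonpos]
  exact laplacian_nonneg_of_isLocalMin hspace
    (contDiff_slice_space (m := 2) hF hp).contDiffAt

theorem continuousOn_laplacian_slice_space {F : V × ℝ → ℝ}
    (hF : ContDiffOn ℝ 2 F (univ ×ˢ Ioi 0)) :
    ContinuousOn (fun p : V × ℝ => Δ (fun y => F (y, p.2)) p.1) (univ ×ˢ Ioi 0) := by
  let b := stdOrthonormalBasis ℝ V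
  have ho : IsOpen (univ ×ˢ Ioi 0 : Set (V × ℝ)) := isOpen_univ.prod isOpen_Ioi
  have hfirst (v : V) : ContDiffOn ℝ 1 (fun p : V × ℝ => fderiv ℝ (fun y => F (y, p.2)) p.1 v)
      (univ ×ˢ Ioi 0) :=
    (contDiffOn_fderiv_comp_prodMk_left (m := 1) ho (hF.of_le (by norm_num))).clm_apply
      contDiffOn_const
  have hsecond (v : V) : ContinuousOn (fun p : V × ℝ =>
      fderiv ℝ (fun y => fderiv ℝ (fun y => F (y, p.2)) y v) p.1 v) (univ ×ˢ Ioi 0) :=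
    ((contDiffOn_fderiv_comp_prodMk_left (m := 0) ho
      (by simpa using hfirst v)).clm_apply contDiffOn_const).continuousOn
  exact (continuousOn_finsetSum _ fun i _ => hsecond (b i)).congr fun p hp =>
    laplacian_eq_sum_fderiv_fderiv b (contDiff_slice_space (m := 2) hF hp.2).contDiffAt

theorem continuousOn_heatOperator {F : V × ℝ → ℝ} (hF : ContDiffOn ℝ 2 F (univ ×ˢ Ioi 0)) :
    ContinuousOn (heatOperator F) (univ ×ˢ Ioi 0) :=
  (continuousOn_deriv_slice_time (hF.of_le one_le_two)).sub (continuousOn_laplacian_slice_space hF)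

end HeatOperator

section HeatFlow

variable {V W : Type*} [NormedAddCommGroup V] [InnerProductSpace ℝ V] [FiniteDimensional ℝ V]
  [MeasurableSpace V] [BorelSpace V] [NormedAddCommGroup W] [NormedSpace ℝ W]

/-- The solution of the heat equation with initial datum `f`, as a function on space-time. -/
noncomputable def heatFlow (f : V → W) (p : V × ℝ) : W :=
  ∫ z, heatKernel (p.1 - z, p.2) • f z

theorem contDiffOn_heatFlow {m : ℕ∞} {f : V → W} (hf : Continuous f) (hfs : HasCompactSupport f) :
    ContDiffOn ℝ m (heatFlow f) (univ ×ˢ Ioi 0) := by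
  refine contDiffOn_integral_smul (k := fun q : (V × ℝ) × V => heatKernel (q.1.1 - q.2, q.1.2))
    (isOpen_univ.prod isOpen_Ioi) (fun q hq => ?_) hf hfs
  exact (ContDiffAt.comp q (g := heatKernel) (f := fun q : (V × ℝ) × V => (q.1.1 - q.2, q.1.2))
    (contDiffAt_heatKernel hq.1.2.ne') (by fun_prop)).contDiffWithinAt

theorem integrable_heatKernel_smul {f : V → W} (hf : Continuous f) (hfs : HasCompactSupport f)
    {p : V × ℝ} (hp : 0 < p.2) : Integrable fun z => heatKernel (p.1 - z, p.2) • f z :=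
  ((continuous_heatKernel_const_sub p.1 hp.ne').smul hf).integrable_of_hasCompactSupport
    hfs.smul_left

section Derivatives

variable {f : V → ℝ} (hf : Continuous f) (hfs : HasCompactSupport f) (x : V) {t : ℝ} (ht : 0 < t)

include hf hfs ht

theorem deriv_heatFlow :
    deriv (fun s => heatFlow f (x, s)) t = ∫ z, heatKernel (x - z, t) •
      ((‖x - z‖ ^ 2 / (4 * t ^ 2) - Module.finrank ℝ V / (2 * t)) * f z) := by
  have hk : ContDiffOn ℝ 1 (fun q : ℝ × V => heatKernel (x - q.2, q.1)) (Ioi 0 ×ˢ univ) :=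
    fun q hq => (ContDiffAt.comp q (g := heatKernel) (f := fun q : ℝ × V => (x - q.2, q.1))
      (contDiffAt_heatKernel (m := 1) hq.1.ne') (by fun_prop)).contDiffWithinAt
  refine (deriv_integral_smul isOpen_Ioi hk hf hfs ht).trans (integral_congr_ae ?_)
  refine Eventually.of_forall fun z => ?_
  simp only [(hasDerivAt_heatKernel (x - z) ht.ne').deriv, smul_eq_mul]
  ring

theorem laplacian_heatFlow :
    Δ (fun y => heatFlow f (y, t)) x = ∫ z, heatKernel (x - z, t) •
      ((‖x - z‖ ^ 2 / (4 * t ^ 2) - Module.finrank ℝ V / (2 * t)) * f z) := by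
  refine (laplacian_integral_smul (contDiff_heatKernel_sub (m := 2) ht.ne') hf hfs x).trans
    (integral_congr_ae (Eventually.of_forall fun z => ?_))
  simp only [laplacian_comp_sub (fun y : V => heatKernel (y, t)) z x,
    laplacian_heatKernel (x - z) ht.ne', smul_eq_mul]
  ring

theorem fderiv_heatFlow_apply (v : V) :
    fderiv ℝ (fun y => heatFlow f (y, t)) x v
      = -(2 * t)⁻¹ * ∫ z, heatKernel (x - z, t) • (inner ℝ (x - z) v * f z) := by
  have hslice (z : V) : fderiv ℝ (fun y : V => heatKernel (y - z, t)) x v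
      = heatKernel (x - z, t) * (-(2 * t)⁻¹ * inner ℝ (x - z) v) := by
    rw [fderiv_comp_sub (f := fun y : V => heatKernel (y, t)),
      (hasGradientAt_heatKernel (x - z) t).fderiv_apply]
    simp only [inner_smul_left, conj_trivial]
  rw [← integral_const_mul]
  refine (fderiv_integral_smul_apply isOpen_univ
    (contDiff_heatKernel_sub (m := 1) ht.ne').contDiffOn hf hfs (mem_univ x) v).trans
      (integral_congr_ae (Eventually.of_forall fun z => ?_))
  simp only [hslice, smul_eq_mul]
  ring

theorem heatOperator_heatFlow : heatOperator (heatFlow f) (x, t) = 0 := by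
  rw [heatOperator, deriv_heatFlow hf hfs x ht, laplacian_heatFlow hf hfs x ht, sub_self]

end Derivatives

theorem heatFlow_pos {f : V → ℝ} (hf : Continuous f) (hfs : HasCompactSupport f)
    (hnn : ∀ z, 0 ≤ f z) (hne : f ≠ 0) {p : V × ℝ} (hp : 0 < p.2) : 0 < heatFlow f p := by
  obtain ⟨z, hz⟩ := Function.ne_iff.1 hne
  have hcont : Continuous fun z => heatKernel (p.1 - z, p.2) • f z :=
    (continuous_heatKernel_const_sub p.1 hp.ne').smul hf
  have hcs : HasCompactSupport fun z => heatKernel (p.1 - z, p.2) • f z :=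
    HasCompactSupport.smul_left (f := fun z => heatKernel (p.1 - z, p.2)) hfs
  refine hcont.integral_pos_of_hasCompactSupport_nonneg_nonzero (x := z) hcs (fun z => ?_) ?_
  · exact mul_nonneg (heatKernel_pos _).le (hnn z)
  · exact mul_ne_zero (heatKernel_pos _).ne' hz

end HeatFlow

section LiYau

variable {V : Type*} [NormedAddCommGroup V] [InnerProductSpace ℝ V] [FiniteDimensional ℝ V]
  [MeasurableSpace V] [BorelSpace V]

/-- The Li–Yau quantity `t² u (Δ log u + d / (2t))` of the heat flow `u` of `f`, written as one
quarter of the variance of the initial point under the unnormalized law `heatKernel (x - z, t) f z`;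
see `sq_mul_laplacian_log_heatFlow`. -/
noncomputable def liYau (f : V → ℝ) (p : V × ℝ) : ℝ :=
  (heatFlow (fun z => ‖z‖ ^ 2 * f z) p - ‖heatFlow (fun z => f z • z) p‖ ^ 2 / heatFlow f p) / 4

variable {f : V → ℝ} (hf : Continuous f) (hfs : HasCompactSupport f)

include hf hfs

theorem inner_heatFlow_smul {p : V × ℝ} (hp : 0 < p.2) (v : V) :
    inner ℝ v (heatFlow (fun z => f z • z) p) = heatFlow (fun z => inner ℝ v z * f z) p := by
  have hint : Integrable fun z => heatKernel (p.1 - z, p.2) • f z • z :=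
    integrable_heatKernel_smul (hf.smul continuous_id') hfs.smul_right hp
  refine (integral_inner hint v).symm.trans (integral_congr_ae (Eventually.of_forall fun z => ?_))
  simp only [inner_smul_right, smul_eq_mul]
  ring

theorem heatFlow_norm_sub_sq_mul_eq {p : V × ℝ} (hp : 0 < p.2) (c : V) :
    heatFlow (fun z => ‖z - c‖ ^ 2 * f z) p
      = heatFlow (fun z => ‖z‖ ^ 2 * f z) p - 2 * inner ℝ c (heatFlow (fun z => f z • z) p)
        + ‖c‖ ^ 2 * heatFlow f p := by
  have h₀ := integrable_heatKernel_smul hf hfs hp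
  have h₁ := integrable_heatKernel_smul (f := fun z => inner ℝ c z * f z)
    ((continuous_const.inner continuous_id').mul hf) hfs.mul_left hp
  have hsq : HasCompactSupport fun z => ‖z‖ ^ 2 * f z :=
    HasCompactSupport.mul_left (f := fun z => ‖z‖ ^ 2) hfs
  have h₂ := integrable_heatKernel_smul (by fun_prop) hsq hp
  have hdiff : Integrable fun z => heatKernel (p.1 - z, p.2) • (‖z‖ ^ 2 * f z)
      - 2 * heatKernel (p.1 - z, p.2) • (inner ℝ c z * f z) := h₂.sub (h₁.const_mul 2)
  rw [inner_heatFlow_smul hf hfs hp]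
  unfold heatFlow
  rw [← integral_const_mul, ← integral_const_mul, ← integral_sub h₂ (h₁.const_mul 2),
    ← integral_add hdiff (h₀.const_mul (‖c‖ ^ 2))]
  refine integral_congr_ae (Eventually.of_forall fun z => ?_)
  simp only [norm_sub_sq_real, real_inner_comm, smul_eq_mul]
  ring

theorem heatFlow_norm_sub_sq_mul {p : V × ℝ} (hp : 0 < p.2) (hu : heatFlow f p ≠ 0) (c : V) :
    heatFlow (fun z => ‖z - c‖ ^ 2 * f z) p
      = 4 * liYau f p
        + heatFlow f p * ‖c - (heatFlow f p)⁻¹ • heatFlow (fun z => f z • z) p‖ ^ 2 := by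
  rw [heatFlow_norm_sub_sq_mul_eq hf hfs hp, norm_sub_sq_real, inner_smul_right, norm_smul,
    mul_pow, norm_inv, inv_pow, Real.norm_eq_abs, sq_abs, liYau]
  field_simp
  ring

theorem laplacian_heatFlow_eq (x : V) {t : ℝ} (ht : 0 < t) :
    Δ (fun y => heatFlow f (y, t)) x = heatFlow (fun z => ‖z - x‖ ^ 2 * f z) (x, t) / (4 * t ^ 2)
      - Module.finrank ℝ V / (2 * t) * heatFlow f (x, t) := by
  have h₀ := integrable_heatKernel_smul hf hfs (p := (x, t)) ht
  have hsq : HasCompactSupport fun z => ‖z - x‖ ^ 2 * f z :=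
    HasCompactSupport.mul_left (f := fun z => ‖z - x‖ ^ 2) hfs
  have h₂ := integrable_heatKernel_smul (by fun_prop) hsq (p := (x, t)) ht
  rw [laplacian_heatFlow hf hfs x ht]
  unfold heatFlow
  rw [← integral_div, ← integral_const_mul,
    ← integral_sub (h₂.div_const (4 * t ^ 2)) (h₀.const_mul _)]
  refine integral_congr_ae (Eventually.of_forall fun z => ?_)
  simp only [norm_sub_rev x z, smul_eq_mul]
  ring

theorem gradient_heatFlow (x : V) {t : ℝ} (ht : 0 < t) :
    ∇ (fun y => heatFlow f (y, t)) x
      = (2 * t)⁻¹ • (heatFlow (fun z => f z • z) (x, t) - heatFlow f (x, t) • x) := by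
  have h₀ := integrable_heatKernel_smul hf hfs (p := (x, t)) ht
  refine ext_inner_right ℝ fun v => ?_
  have h₁ := integrable_heatKernel_smul (f := fun z => inner ℝ v z * f z)
    ((continuous_const.inner continuous_id').mul hf) hfs.mul_left (p := (x, t)) ht
  have hmoment : ∫ z, heatKernel (x - z, t) • (inner ℝ (x - z) v * f z)
      = inner ℝ x v * heatFlow f (x, t) - heatFlow (fun z => inner ℝ v z * f z) (x, t) := by
    unfold heatFlow
    rw [← integral_const_mul, ← integral_sub (h₀.const_mul _) h₁]
    refine integral_congr_ae (Eventually.of_forall fun z => ?_)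
    simp only [inner_sub_left, real_inner_comm, smul_eq_mul]
    ring
  rw [inner_gradient_left, fderiv_heatFlow_apply hf hfs x ht, real_inner_smul_left,
    inner_sub_left, real_inner_smul_left, real_inner_comm,
    inner_heatFlow_smul hf hfs (p := (x, t)) ht, hmoment]
  ring

variable (hnn : ∀ z, 0 ≤ f z) (hne : f ≠ 0)

include hnn hne

theorem sq_mul_laplacian_log_heatFlow (x : V) {t : ℝ} (ht : 0 < t) :
    t ^ 2 * heatFlow f (x, t) * (Δ (fun y => log (heatFlow f (y, t))) x
      + Module.finrank ℝ V / (2 * t)) = liYau f (x, t) := by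
  have hu : heatFlow f (x, t) ≠ 0 := (heatFlow_pos hf hfs hnn hne ht).ne'
  have hC : ContDiffAt ℝ 2 (fun y => heatFlow f (y, t)) x :=
    (contDiff_slice_space (m := 2) (contDiffOn_heatFlow hf hfs) ht).contDiffAt
  have hlog : Δ (fun y => log (heatFlow f (y, t))) x
      = (heatFlow f (x, t))⁻¹ * Δ (fun y => heatFlow f (y, t)) x
        - (heatFlow f (x, t) ^ 2)⁻¹ * ‖∇ (fun y => heatFlow f (y, t)) x‖ ^ 2 := by
    rw [laplacian_comp (u := fun y => heatFlow f (y, t)) (contDiffAt_log.2 hu) hC]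
    simp only [deriv_log', deriv_inv]
    ring
  set c := (heatFlow f (x, t))⁻¹ • heatFlow (fun z => f z • z) (x, t) with hc
  have hgrad : ‖∇ (fun y => heatFlow f (y, t)) x‖ ^ 2
      = heatFlow f (x, t) ^ 2 / (4 * t ^ 2) * ‖x - c‖ ^ 2 := by
    have hcenter : heatFlow (fun z => f z • z) (x, t) - heatFlow f (x, t) • x
        = -heatFlow f (x, t) • (x - c) := by
      rw [hc, smul_sub, smul_smul, neg_mul, mul_inv_cancel₀ hu]
      module
    rw [gradient_heatFlow hf hfs x ht, hcenter, norm_smul, norm_smul, mul_pow, mul_pow,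
      Real.norm_eq_abs, Real.norm_eq_abs, sq_abs, sq_abs]
    ring
  rw [hlog, hgrad, laplacian_heatFlow_eq hf hfs x ht,
    heatFlow_norm_sub_sq_mul hf hfs (p := (x, t)) ht hu, ← hc]
  field_simp
  ring

theorem contDiffOn_liYau {m : ℕ∞} : ContDiffOn ℝ m (liYau f) (univ ×ˢ Ioi 0) := by
  have hsq : HasCompactSupport fun z => ‖z‖ ^ 2 * f z :=
    HasCompactSupport.mul_left (f := fun z => ‖z‖ ^ 2) hfs
  have hmean : HasCompactSupport fun z => f z • z := HasCompactSupport.smul_right hfs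
  exact ((contDiffOn_heatFlow (by fun_prop) hsq).sub
    (((contDiffOn_heatFlow (by fun_prop) hmean).norm_sq ℝ).div (contDiffOn_heatFlow hf hfs)
      fun p hp => (heatFlow_pos hf hfs hnn hne hp.2).ne')).div_const 4

-- A quarter of some heat flow touches `liYau f` from above at `p`: the difference has a minimum.
theorem heatOperator_liYau_nonneg {p : V × ℝ} (hp : 0 < p.2) : 0 ≤ heatOperator (liYau f) p := by
  set c := (heatFlow f p)⁻¹ • heatFlow (fun z => f z • z) p with hc
  let g : V → ℝ := fun z => 4⁻¹ * (‖z - c‖ ^ 2 * f z)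
  have hg : Continuous g := by fun_prop
  have hgs : HasCompactSupport g :=
    HasCompactSupport.mul_left (f := fun _ => 4⁻¹)
      (HasCompactSupport.mul_left (f := fun z => ‖z - c‖ ^ 2) hfs)
  have hgap {q : V × ℝ} (hq : 0 < q.2) : heatFlow g q - liYau f q = heatFlow f q / 4
      * ‖c - (heatFlow f q)⁻¹ • heatFlow (fun z => f z • z) q‖ ^ 2 := by
    have hquarter : heatFlow g q = 4⁻¹ * heatFlow (fun z => ‖z - c‖ ^ 2 * f z) q := by
      simp only [heatFlow, ← integral_const_mul, g, smul_eq_mul, mul_left_comm]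
    rw [hquarter, heatFlow_norm_sub_sq_mul hf hfs hq (heatFlow_pos hf hfs hnn hne hq).ne']
    ring
  have hmin : IsLocalMin (fun q => heatFlow g q - liYau f q) p := by
    filter_upwards [continuousAt_snd.eventually (lt_mem_nhds hp)] with q hq
    rw [hgap hp, hgap hq, ← hc, sub_self, norm_zero, zero_pow two_ne_zero, mul_zero]
    exact mul_nonneg (div_nonneg (heatFlow_pos hf hfs hnn hne hq).le zero_le_four) (sq_nonneg _)
  have hflow := contDiffOn_heatFlow (m := 2) hg hgs
  have hliYau := contDiffOn_liYau (m := 2) hf hfs hnn hne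
  have hle := heatOperator_nonpos_of_isLocalMin (hflow.sub hliYau) hp hmin
  rw [heatOperator_sub hflow hliYau hp, heatOperator_heatFlow hg hgs p.1 hp] at hle
  linarith

end LiYau

section Weight

/-- The weight `ω(s) = e^s - 1 - s` for `s ≥ 0`, extended by zero to a `C¹` function on the line.
It turns the logarithm `ψ` of a backward heat kernel into a weight vanishing to first order on the
boundary of the heat ball `{ψ ≥ 0}`. -/
noncomputable def heatBallWeight (s : ℝ) : ℝ := exp (max s 0) - 1 - max s 0

theorem heatBallWeight_of_nonneg {s : ℝ} (hs : 0 ≤ s) : heatBallWeight s = exp s - 1 - s := by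
  rw [heatBallWeight, max_eq_left hs]

theorem heatBallWeight_of_nonpos {s : ℝ} (hs : s ≤ 0) : heatBallWeight s = 0 := by
  simp [heatBallWeight, max_eq_right hs]

theorem heatBallWeight_nonneg (s : ℝ) : 0 ≤ heatBallWeight s := by
  rw [heatBallWeight]
  linarith [add_one_le_exp (max s 0)]

theorem continuous_heatBallWeight : Continuous heatBallWeight := by
  unfold heatBallWeight
  fun_prop

theorem hasDerivAt_exp_sub_one_sub (s : ℝ) :
    HasDerivAt (fun s => exp s - 1 - s) (exp s - 1) s :=
  ((hasDerivAt_exp s).sub_const 1).sub (hasDerivAt_id' s)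

theorem hasDerivAt_heatBallWeight (s : ℝ) :
    HasDerivAt heatBallWeight (exp (max s 0) - 1) s := by
  refine hasDerivAt_of_hasDerivAt_of_ne' (g := fun s => exp (max s 0) - 1) (x := 0)
    (fun y hy => ?_) continuous_heatBallWeight.continuousAt (by fun_prop) s
  rcases hy.lt_or_gt with hneg | hpos
  · simp only [max_eq_right hneg.le, exp_zero, sub_self]
    refine (hasDerivAt_const y 0).congr_of_eventuallyEq ?_
    filter_upwards [gt_mem_nhds hneg] with z hz using heatBallWeight_of_nonpos (le_of_lt hz)
  · simp only [max_eq_left hpos.le]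
    refine (hasDerivAt_exp_sub_one_sub y).congr_of_eventuallyEq ?_
    filter_upwards [lt_mem_nhds hpos] with z hz using heatBallWeight_of_nonneg (le_of_lt hz)

theorem monotone_exp_neg_mul_heatBallWeight (s : ℝ) :
    Monotone fun L => exp (-L) * heatBallWeight (s + L) := by
  have hderiv (L : ℝ) : HasDerivAt (fun L => exp (-L) * heatBallWeight (s + L))
      (exp (-L) * max (s + L) 0) L := by
    refine ((hasDerivAt_neg' L).exp.mul
      ((hasDerivAt_heatBallWeight (s + L)).comp_const_add s L)).congr_deriv ?_
    rw [heatBallWeight]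
    ring
  refine monotone_of_deriv_nonneg (fun L => (hderiv L).differentiableAt) fun L => ?_
  rw [(hderiv L).deriv]
  positivity

theorem tendsto_exp_neg_mul_heatBallWeight (s : ℝ) :
    Tendsto (fun L => exp (-L) * heatBallWeight (s + L)) atTop (𝓝 (exp s)) := by
  have hlin : Tendsto (fun L : ℝ => L * exp (-L)) atTop (𝓝 0) := by
    simpa using tendsto_pow_mul_exp_neg_atTop_nhds_zero 1
  have hlim : Tendsto (fun L => exp s - (1 + s) * exp (-L) - L * exp (-L)) atTop (𝓝 (exp s)) := by
    simpa using ((tendsto_exp_neg_atTop_nhds_zero.const_mul (1 + s)).const_sub (exp s)).sub hlin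
  refine hlim.congr' ?_
  filter_upwards [eventually_ge_atTop (-s)] with L hL
  rw [heatBallWeight_of_nonneg (neg_le_iff_add_nonneg'.1 hL), exp_add, exp_neg]
  field_simp
  ring

theorem exp_neg_mul_heatBallWeight_le (s L : ℝ) : exp (-L) * heatBallWeight (s + L) ≤ exp s :=
  (monotone_exp_neg_mul_heatBallWeight s).ge_of_tendsto (tendsto_exp_neg_mul_heatBallWeight s) L

end Weight

section HeatBall

variable {V : Type*} [NormedAddCommGroup V] [InnerProductSpace ℝ V]

/-- The function `ψ_r = log Ĥ + d log r`, where `Ĥ` is the backward heat kernel centered at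
`(x₀, t₀)` and `d` the dimension; it is meaningful before time `t₀` only. -/
noncomputable def heatBallPotential (x₀ : V) (t₀ r : ℝ) (p : V × ℝ) : ℝ :=
  logHeatKernel (p.1 - x₀, t₀ - p.2) + Module.finrank ℝ V * log r

/-- The heat ball of radius `r` centered at `(x₀, t₀)`, restricted to positive times: the region
where the backward heat kernel is at least `r ^ (-d)`. -/
def heatBall (x₀ : V) (t₀ r : ℝ) : Set (V × ℝ) :=
  {p | 0 < p.2 ∧ p.2 < t₀ ∧ 0 ≤ heatBallPotential x₀ t₀ r p}

/-- The part of the heat ball up to time `T`, which for `T < t₀` stays away from the singularity of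
the backward heat kernel at `(x₀, t₀)`. -/
def truncatedHeatBall (x₀ : V) (t₀ r T : ℝ) : Set (V × ℝ) := {p ∈ heatBall x₀ t₀ r | p.2 ≤ T}

/-- A compact cylinder containing the heat ball; its bottom is the lowest time reached by the
unrestricted heat ball. -/
def heatCylinder (x₀ : V) (t₀ r : ℝ) : Set (V × ℝ) :=
  Metric.closedBall x₀ √(Module.finrank ℝ V * r ^ 2 / (2 * π)) ×ˢ Icc (t₀ - r ^ 2 / (4 * π)) t₀

variable {x₀ : V} {t₀ r : ℝ}

theorem contDiffAt_heatBallPotential {m : ℕ∞} {p : V × ℝ} (hp : p.2 < t₀) :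
    ContDiffAt ℝ m (heatBallPotential x₀ t₀ r) p :=
  (ContDiffAt.comp (f := fun p : V × ℝ => (p.1 - x₀, t₀ - p.2)) (g := logHeatKernel) p
    (contDiffAt_logHeatKernel (sub_pos.2 hp).ne') (by fun_prop)).add contDiffAt_const

theorem continuousOn_heatBallPotential :
    ContinuousOn (heatBallPotential x₀ t₀ r) (univ ×ˢ Iio t₀) := fun _ hp =>
  (contDiffAt_heatBallPotential (m := 0) hp.2).continuousAt.continuousWithinAt

theorem contDiff_heatBallPotential_slice {m : ℕ∞} {t : ℝ} (ht : t < t₀) :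
    ContDiff ℝ m fun y => heatBallPotential x₀ t₀ r (y, t) :=
  contDiff_iff_contDiffAt.2 fun y => ContDiffAt.comp y (g := heatBallPotential x₀ t₀ r)
    (contDiffAt_heatBallPotential (p := (y, t)) ht) (contDiffAt_id.prodMk contDiffAt_const)

theorem heatBallPotential_eq_log_sub (hr : 0 < r) {p : V × ℝ} (hp : p.2 < t₀) :
    heatBallPotential x₀ t₀ r p = Module.finrank ℝ V / 2 * log (r ^ 2 / (4 * π * (t₀ - p.2)))
      - ‖p.1 - x₀‖ ^ 2 / (4 * (t₀ - p.2)) := by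
  have hτ : 4 * π * (t₀ - p.2) ≠ 0 := mul_ne_zero (by positivity) (sub_pos.2 hp).ne'
  rw [heatBallPotential, logHeatKernel, log_div (pow_ne_zero 2 hr.ne') hτ, log_pow]
  push_cast
  ring

theorem heatBallPotential_nonpos (hr : 0 < r) {p : V × ℝ} (hp : p.2 ≤ t₀ - r ^ 2 / (4 * π)) :
    heatBallPotential x₀ t₀ r p ≤ 0 := by
  have hle : r ^ 2 / (4 * π) ≤ t₀ - p.2 := le_sub_comm.1 hp
  have hτ : 0 < t₀ - p.2 := lt_of_lt_of_le (by positivity) hle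
  have hlog : log (r ^ 2 / (4 * π * (t₀ - p.2))) ≤ 0 := by
    refine log_nonpos (by positivity) (div_le_one_of_le₀ ?_ (by positivity))
    rwa [mul_comm, ← div_le_iff₀ (by positivity)]
  rw [heatBallPotential_eq_log_sub hr (sub_pos.1 hτ), sub_nonpos]
  exact (mul_nonpos_of_nonneg_of_nonpos (by positivity) hlog).trans (by positivity)

theorem setOf_heatBallPotential_nonneg_eq_closedBall {t : ℝ} (ht : t < t₀) :
    ∃ R : ℝ, {y | 0 ≤ heatBallPotential x₀ t₀ r (y, t)} = Metric.closedBall x₀ R ∧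
      ∀ y ∈ Metric.sphere x₀ R, heatBallPotential x₀ t₀ r (y, t) = 0 := by
  have hτ : 0 < t₀ - t := sub_pos.2 ht
  set D := 4 * (t₀ - t) * heatBallPotential x₀ t₀ r (x₀, t)
  have hψ (y : V) : heatBallPotential x₀ t₀ r (y, t) = (D - ‖y - x₀‖ ^ 2) / (4 * (t₀ - t)) := by
    simp only [D, heatBallPotential, logHeatKernel, sub_self, norm_zero]
    field_simp
    ring
  have hnonneg (y : V) : 0 ≤ heatBallPotential x₀ t₀ r (y, t) ↔ ‖y - x₀‖ ^ 2 ≤ D := by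
    rw [hψ, le_div_iff₀ (by positivity), zero_mul, sub_nonneg]
  rcases lt_or_ge D 0 with hD | hD
  · refine ⟨-1, ?_, ?_⟩
    · rw [Metric.closedBall_eq_empty.2 neg_one_lt_zero, eq_empty_iff_forall_notMem]
      exact fun y hy => (hD.trans_le (sq_nonneg _)).not_ge ((hnonneg y).1 hy)
    · simp [Metric.sphere_eq_empty_of_neg]
  · refine ⟨√D, ?_, fun y hy => ?_⟩
    · ext y
      rw [mem_ofPred_eq, hnonneg, mem_closedBall_iff_norm, le_sqrt (norm_nonneg _) hD]
    · rw [hψ, mem_sphere_iff_norm.1 hy, sq_sqrt hD, sub_self, zero_div]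

theorem sub_sq_div_four_mul_pi_pos (hrt : r ^ 2 < 4 * π * t₀) : 0 < t₀ - r ^ 2 / (4 * π) :=
  sub_pos.2 ((div_lt_iff₀' (by positivity)).2 hrt)

theorem heatCylinder_subset (hrt : r ^ 2 < 4 * π * t₀) :
    heatCylinder x₀ t₀ r ⊆ univ ×ˢ Ioi 0 := fun _ hp =>
  ⟨mem_univ _, (sub_sq_div_four_mul_pi_pos hrt).trans_le hp.2.1⟩

theorem heatBallPotential_mono {r₁ r₂ : ℝ} (hr₁ : 0 < r₁) (h : r₁ ≤ r₂) (p : V × ℝ) :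
    heatBallPotential x₀ t₀ r₁ p ≤ heatBallPotential x₀ t₀ r₂ p := by
  unfold heatBallPotential
  gcongr

theorem truncatedHeatBall_mono {r₁ r₂ : ℝ} (hr₁ : 0 < r₁) (h : r₁ ≤ r₂) (T : ℝ) :
    truncatedHeatBall x₀ t₀ r₁ T ⊆ truncatedHeatBall x₀ t₀ r₂ T := fun p hp =>
  ⟨⟨hp.1.1, hp.1.2.1, hp.1.2.2.trans (heatBallPotential_mono hr₁ h p)⟩, hp.2⟩

theorem rpow_mul_heatBallWeight_mono {r₁ r₂ : ℝ} (hr₁ : 0 < r₁) (h : r₁ ≤ r₂) (p : V × ℝ) :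
    r₁ ^ (-(Module.finrank ℝ V : ℝ)) * heatBallWeight (heatBallPotential x₀ t₀ r₁ p)
      ≤ r₂ ^ (-(Module.finrank ℝ V : ℝ)) * heatBallWeight (heatBallPotential x₀ t₀ r₂ p) := by
  have hlog : Module.finrank ℝ V * log r₁ ≤ Module.finrank ℝ V * log r₂ := by gcongr
  rw [rpow_def_of_pos hr₁, rpow_def_of_pos (hr₁.trans_le h), mul_neg, mul_neg, mul_comm (log r₁),
    mul_comm (log r₂)]
  exact monotone_exp_neg_mul_heatBallWeight _ hlog

theorem hasDerivAt_heatBallPotential (y : V) {t : ℝ} (ht : t < t₀) :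
    HasDerivAt (fun s => heatBallPotential x₀ t₀ r (y, s))
      (Module.finrank ℝ V / (2 * (t₀ - t)) - ‖y - x₀‖ ^ 2 / (4 * (t₀ - t) ^ 2)) t := by
  have h := ((hasDerivAt_logHeatKernel (y - x₀) (sub_pos.2 ht).ne').comp_const_sub t₀ t).add_const
    (Module.finrank ℝ V * log r)
  rwa [neg_sub] at h

variable [FiniteDimensional ℝ V]

theorem isCompact_heatCylinder : IsCompact (heatCylinder x₀ t₀ r) :=
  (isCompact_closedBall _ _).prod isCompact_Icc

theorem mem_heatCylinder [Nontrivial V] (hr : 0 < r) {p : V × ℝ} (hp : p.2 < t₀)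
    (h : 0 ≤ heatBallPotential x₀ t₀ r p) : p ∈ heatCylinder x₀ t₀ r := by
  have hτ : 0 < t₀ - p.2 := sub_pos.2 hp
  have hd : 0 < (Module.finrank ℝ V : ℝ) := Nat.cast_pos.2 Module.finrank_pos
  have hq : 0 < r ^ 2 / (4 * π * (t₀ - p.2)) := by positivity
  rw [heatBallPotential_eq_log_sub hr hp, sub_nonneg] at h
  refine ⟨?_, ?_, hp.le⟩
  · have hnorm : ‖p.1 - x₀‖ ^ 2 / (4 * (t₀ - p.2))
        ≤ Module.finrank ℝ V / 2 * (r ^ 2 / (4 * π * (t₀ - p.2))) :=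
      h.trans (by gcongr; linarith [log_le_sub_one_of_pos hq])
    rw [div_le_iff₀ (by positivity)] at hnorm
    rw [mem_closedBall_iff_norm]
    refine le_sqrt_of_sq_le (hnorm.trans_eq ?_)
    field_simp
  · have hlog : 0 ≤ log (r ^ 2 / (4 * π * (t₀ - p.2))) :=
      nonneg_of_mul_nonneg_right (le_trans (by positivity) h) (by positivity)
    have hone := (log_nonneg_iff hq).1 hlog
    rw [one_le_div (by positivity), ← le_div_iff₀' (by positivity)] at hone
    linarith

theorem isCompact_truncatedHeatBall [Nontrivial V] (hr : 0 < r) (hrt : r ^ 2 < 4 * π * t₀) {T : ℝ}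
    (hT : T < t₀) : IsCompact (truncatedHeatBall x₀ t₀ r T) := by
  have hK : IsCompact (heatCylinder x₀ t₀ r ∩ univ ×ˢ Iic T) :=
    isCompact_heatCylinder.inter_right (isClosed_univ.prod isClosed_Iic)
  have hψ : ContinuousOn (heatBallPotential x₀ t₀ r) (heatCylinder x₀ t₀ r ∩ univ ×ˢ Iic T) :=
    continuousOn_heatBallPotential.mono fun p hp => ⟨mem_univ _, hp.2.2.trans_lt hT⟩
  suffices heq : truncatedHeatBall x₀ t₀ r T = heatCylinder x₀ t₀ r ∩ univ ×ˢ Iic T ∩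
      heatBallPotential x₀ t₀ r ⁻¹' Ici 0 from
    heq ▸ hK.of_isClosed_subset (hψ.preimage_isClosed_of_isClosed hK.isClosed isClosed_Ici)
      inter_subset_left
  ext p
  exact ⟨fun hp => ⟨⟨mem_heatCylinder hr hp.1.2.1 hp.1.2.2, mem_univ _, hp.2⟩, hp.1.2.2⟩,
    fun hp => ⟨⟨(heatCylinder_subset hrt hp.1.1).2, hp.1.2.2.trans_lt hT, hp.2⟩, hp.1.2.2⟩⟩

theorem norm_sq_gradient_heatBallPotential (p : V × ℝ) :
    ‖∇ (fun y => heatBallPotential x₀ t₀ r (y, p.2)) p.1‖ ^ 2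
      = ‖p.1 - x₀‖ ^ 2 / (4 * (t₀ - p.2) ^ 2) := by
  rw [← norm_sq_gradient_logHeatKernel]
  simp only [heatBallPotential, gradient, fderiv_add_const,
    fderiv_comp_sub (f := fun y => logHeatKernel (y, t₀ - p.2))]

theorem laplacian_heatBallPotential (y : V) {t : ℝ} (ht : t < t₀) :
    Δ (fun y => heatBallPotential x₀ t₀ r (y, t)) y
      = -(Module.finrank ℝ V / (2 * (t₀ - t))) := by
  have hτ : t₀ - t ≠ 0 := (sub_pos.2 ht).ne'
  have hcomp : ContDiff ℝ 2 fun y : V => logHeatKernel (y - x₀, t₀ - t) :=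
    (contDiff_logHeatKernel_slice (m := 2) hτ).comp (contDiff_id.sub contDiff_const)
  calc Δ (fun y => heatBallPotential x₀ t₀ r (y, t)) y
      = Δ (fun y => logHeatKernel (y - x₀, t₀ - t)) y
          + Δ (fun _ : V => Module.finrank ℝ V * log r) y :=
        hcomp.contDiffAt.laplacian_add contDiffAt_const
    _ = -(Module.finrank ℝ V / (2 * (t₀ - t))) := by
        rw [laplacian_comp_sub (fun y => logHeatKernel (y, t₀ - t)), laplacian_logHeatKernel _ hτ,
          laplacian_const, Pi.zero_apply, add_zero]

theorem laplacian_exp_sub_one_sub_heatBallPotential (y : V) {t : ℝ} (ht : t < t₀) :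
    Δ (fun y => exp (heatBallPotential x₀ t₀ r (y, t)) - 1 - heatBallPotential x₀ t₀ r (y, t)) y
      = exp (heatBallPotential x₀ t₀ r (y, t)) * (‖y - x₀‖ ^ 2 / (4 * (t₀ - t) ^ 2))
        - (exp (heatBallPotential x₀ t₀ r (y, t)) - 1)
          * (Module.finrank ℝ V / (2 * (t₀ - t))) := by
  have hfirst : deriv (fun s => exp s - 1 - s) = fun s => exp s - 1 :=
    funext fun s => (hasDerivAt_exp_sub_one_sub s).deriv
  have hsecond (s : ℝ) : deriv (fun s => exp s - 1) s = exp s :=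
    ((hasDerivAt_exp s).sub_const 1).deriv
  rw [laplacian_comp (h := fun s => exp s - 1 - s) (by fun_prop)
    (contDiff_heatBallPotential_slice (m := 2) ht).contDiffAt, hfirst, hsecond,
    laplacian_heatBallPotential y ht, norm_sq_gradient_heatBallPotential (y, t)]
  ring

end HeatBall

section Slices

variable {α : Type*} [MeasurableSpace α] {μ : Measure α} [SFinite μ]

theorem setIntegral_univ_prod_Icc_of_hasDerivAt {g g' : α × ℝ → ℝ} {a b : ℝ} (hab : a ≤ b)
    (hderiv : ∀ y, ∀ t ∈ Icc a b, HasDerivAt (fun s => g (y, s)) (g' (y, t)) t)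
    (hcont : ∀ y, ContinuousOn (fun t => g' (y, t)) (Icc a b))
    (hint : IntegrableOn g' (univ ×ˢ Icc a b) (μ.prod volume)) :
    ∫ p in univ ×ˢ Icc a b, g' p ∂μ.prod volume = ∫ y, (g (y, b) - g (y, a)) ∂μ := by
  rw [setIntegral_prod _ hint, setIntegral_univ]
  refine integral_congr_ae (Eventually.of_forall fun y => ?_)
  simp only [integral_Icc_eq_integral_Ioc, ← intervalIntegral.integral_of_le hab]
  rw [← uIcc_of_le hab] at hderiv hcont
  exact intervalIntegral.integral_eq_sub_of_hasDerivAt (hderiv y) (hcont y).intervalIntegrable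

theorem setIntegral_eq_zero_of_forall_slice {g : α × ℝ → ℝ} {K : Set (α × ℝ)}
    (hK : MeasurableSet K) (hint : IntegrableOn g K (μ.prod volume))
    (hslice : ∀ t, ∫ y in {y | (y, t) ∈ K}, g (y, t) ∂μ = 0) :
    ∫ p in K, g p ∂μ.prod volume = 0 := by
  rw [← integral_indicator hK, integral_prod_symm _ (hint.integrable_indicator hK)]
  refine integral_eq_zero_of_ae (Eventually.of_forall fun t => ?_)
  exact (integral_indicator (f := fun y => g (y, t)) (measurable_prodMk_right hK)).trans (hslice t)

end Slices

section HeatBallIdentity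

variable {V : Type*} [NormedAddCommGroup V] [InnerProductSpace ℝ V]

/-- The function `F` on space-time weighted by `ω(ψ_r)`. -/
noncomputable def heatBallDensity (x₀ : V) (t₀ r : ℝ) (F : V × ℝ → ℝ) (p : V × ℝ) : ℝ :=
  heatBallWeight (heatBallPotential x₀ t₀ r p) * F p

variable {x₀ : V} {t₀ r T : ℝ} {F : V × ℝ → ℝ}

theorem heatBallDensity_of_nonpos {p : V × ℝ} (hp : heatBallPotential x₀ t₀ r p ≤ 0) :
    heatBallDensity x₀ t₀ r F p = 0 := by
  rw [heatBallDensity, heatBallWeight_of_nonpos hp, zero_mul]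

theorem hasDerivAt_heatBallDensity {y : V} {t : ℝ} (ht : t < t₀)
    (hF : DifferentiableAt ℝ (fun s => F (y, s)) t) :
    HasDerivAt (fun s => heatBallDensity x₀ t₀ r F (y, s))
      ((exp (max (heatBallPotential x₀ t₀ r (y, t)) 0) - 1)
          * (Module.finrank ℝ V / (2 * (t₀ - t)) - ‖y - x₀‖ ^ 2 / (4 * (t₀ - t) ^ 2)) * F (y, t)
        + heatBallWeight (heatBallPotential x₀ t₀ r (y, t)) * deriv (fun s => F (y, s)) t) t :=
  ((hasDerivAt_heatBallWeight _).comp t (hasDerivAt_heatBallPotential y ht)).mul hF.hasDerivAt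

theorem continuousOn_deriv_heatBallDensity (hF : ContDiffOn ℝ 1 F (univ ×ˢ Ioi 0)) :
    ContinuousOn (fun p => deriv (fun s => heatBallDensity x₀ t₀ r F (p.1, s)) p.2)
      (univ ×ˢ Ioo 0 t₀) := by
  have hsub : (univ ×ˢ Ioo 0 t₀ : Set (V × ℝ)) ⊆ univ ×ˢ Ioi 0 :=
    prod_mono_right Ioo_subset_Ioi_self
  have hψ : ContinuousOn (heatBallPotential x₀ t₀ r) (univ ×ˢ Ioo 0 t₀) :=
    continuousOn_heatBallPotential.mono (prod_mono_right Ioo_subset_Iio_self)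
  have hτ (p : V × ℝ) (hp : p ∈ univ ×ˢ Ioo 0 t₀) : t₀ - p.2 ≠ 0 := (sub_pos.2 hp.2.2).ne'
  have hq : ContinuousOn (fun p : V × ℝ =>
      Module.finrank ℝ V / (2 * (t₀ - p.2)) - ‖p.1 - x₀‖ ^ 2 / (4 * (t₀ - p.2) ^ 2))
      (univ ×ˢ Ioo 0 t₀) :=
    (continuousOn_const.div (by fun_prop) fun p hp => mul_ne_zero two_ne_zero (hτ p hp)).sub
      (ContinuousOn.div (by fun_prop) (by fun_prop) fun p hp =>
        mul_ne_zero four_ne_zero (pow_ne_zero 2 (hτ p hp)))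
  refine ContinuousOn.congr ?_ fun p hp => (hasDerivAt_heatBallDensity hp.2.2
    ((contDiffAt_slice_time (m := 1) hF p.1 hp.2.1).differentiableAt one_ne_zero)).deriv
  exact (((hψ.sup continuousOn_const).rexp.sub continuousOn_const).mul hq |>.mul
    (hF.continuousOn.mono hsub)).add ((continuous_heatBallWeight.comp_continuousOn hψ).mul
      ((continuousOn_deriv_slice_time hF).mono hsub))

variable [FiniteDimensional ℝ V]

-- The backward heat equation for `e^ψ` gives `(∂/∂t + Δ)(e^ψ - 1 - ψ) = ‖∇ψ‖²`.
theorem deriv_heatBallDensity_of_mem_heatBall (hF : ContDiffOn ℝ 2 F (univ ×ˢ Ioi 0)) {p : V × ℝ}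
    (hp : p ∈ heatBall x₀ t₀ r) :
    deriv (fun s => heatBallDensity x₀ t₀ r F (p.1, s)) p.2
      = ‖∇ (fun y => heatBallPotential x₀ t₀ r (y, p.2)) p.1‖ ^ 2 * F p
        + heatBallDensity x₀ t₀ r (heatOperator F) p
        + ((exp (heatBallPotential x₀ t₀ r p) - 1 - heatBallPotential x₀ t₀ r p)
            * Δ (fun y => F (y, p.2)) p.1
          - F p * Δ (fun y => exp (heatBallPotential x₀ t₀ r (y, p.2)) - 1
              - heatBallPotential x₀ t₀ r (y, p.2)) p.1) := by
  rw [(hasDerivAt_heatBallDensity hp.2.1 ((contDiffAt_slice_time (m := 2) hF p.1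
      hp.1).differentiableAt two_ne_zero)).deriv,
    laplacian_exp_sub_one_sub_heatBallPotential p.1 hp.2.1, norm_sq_gradient_heatBallPotential,
    heatBallDensity, heatOperator, max_eq_left hp.2.2, heatBallWeight_of_nonneg hp.2.2]
  ring

variable [MeasurableSpace V] [BorelSpace V] [Nontrivial V]

theorem integrableOn_truncatedHeatBall (hr : 0 < r) (hrt : r ^ 2 < 4 * π * t₀) (hT : T < t₀)
    {g : V × ℝ → ℝ} (hg : ContinuousOn g (univ ×ˢ Ioo 0 t₀)) :
    IntegrableOn g (truncatedHeatBall x₀ t₀ r T) :=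
  (hg.mono fun _ hp => ⟨mem_univ _, hp.1.1, hp.1.2.1⟩).integrableOn_compact
    (isCompact_truncatedHeatBall hr hrt hT)

theorem integrableOn_norm_sq_gradient_mul (hr : 0 < r) (hrt : r ^ 2 < 4 * π * t₀) (hT : T < t₀)
    (hF : ContinuousOn F (univ ×ˢ Ioi 0)) :
    IntegrableOn (fun p => ‖∇ (fun y => heatBallPotential x₀ t₀ r (y, p.2)) p.1‖ ^ 2 * F p)
      (truncatedHeatBall x₀ t₀ r T) := by
  simp only [norm_sq_gradient_heatBallPotential]
  refine integrableOn_truncatedHeatBall hr hrt hT (ContinuousOn.mul (ContinuousOn.div (by fun_prop)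
    (by fun_prop) fun p hp => ?_) (hF.mono (prod_mono_right Ioo_subset_Ioi_self)))
  exact mul_ne_zero four_ne_zero (pow_ne_zero 2 (sub_pos.2 hp.2.2).ne')

theorem integrableOn_heatBallDensity (hr : 0 < r) (hrt : r ^ 2 < 4 * π * t₀) (hT : T < t₀)
    (hF : ContinuousOn F (univ ×ˢ Ioi 0)) :
    IntegrableOn (heatBallDensity x₀ t₀ r F) (truncatedHeatBall x₀ t₀ r T) :=
  integrableOn_truncatedHeatBall hr hrt hT ((continuous_heatBallWeight.comp_continuousOn
    (continuousOn_heatBallPotential.mono (prod_mono_right Ioo_subset_Iio_self))).mul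
      (hF.mono (prod_mono_right Ioo_subset_Ioi_self)))

theorem setIntegral_truncatedHeatBall_deriv_heatBallDensity (hr : 0 < r)
    (hrt : r ^ 2 < 4 * π * t₀) (hT : T ∈ Ico (t₀ - r ^ 2 / (4 * π)) t₀)
    (hF : ContDiffOn ℝ 1 F (univ ×ˢ Ioi 0)) :
    ∫ p in truncatedHeatBall x₀ t₀ r T, deriv (fun s => heatBallDensity x₀ t₀ r F (p.1, s)) p.2
      = ∫ y, heatBallDensity x₀ t₀ r F (y, T) := by
  set a := t₀ - r ^ 2 / (4 * π)
  set g' : V × ℝ → ℝ := fun p => deriv (fun s => heatBallDensity x₀ t₀ r F (p.1, s)) p.2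
  have ha : 0 < a := sub_sq_div_four_mul_pi_pos hrt
  have hmem (t : ℝ) (ht : t ∈ Icc a T) : t ∈ Ioo 0 t₀ :=
    ⟨ha.trans_le ht.1, ht.2.trans_lt hT.2⟩
  have hderiv (y : V) (t : ℝ) (ht : t ∈ Icc a T) :=
    hasDerivAt_heatBallDensity (x₀ := x₀) (r := r) (hmem t ht).2
      ((contDiffAt_slice_time (m := 1) hF y (hmem t ht).1).differentiableAt one_ne_zero)
  have hcont : ContinuousOn g' (univ ×ˢ Ioo 0 t₀) := continuousOn_deriv_heatBallDensity hF
  have hsub : truncatedHeatBall x₀ t₀ r T ⊆ univ ×ˢ Icc a T := fun p hp =>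
    ⟨mem_univ _, (mem_heatCylinder hr hp.1.2.1 hp.1.2.2).2.1, hp.2⟩
  have hzero (p : V × ℝ) (hp : p ∈ univ ×ˢ Icc a T \ truncatedHeatBall x₀ t₀ r T) : g' p = 0 := by
    have hneg : heatBallPotential x₀ t₀ r p ≤ 0 := le_of_not_ge fun h =>
      hp.2 ⟨⟨(hmem _ hp.1.2).1, (hmem _ hp.1.2).2, h⟩, hp.1.2.2⟩
    refine (hderiv p.1 p.2 hp.1.2).deriv.trans ?_
    simp only [max_eq_right hneg, heatBallWeight_of_nonpos hneg, exp_zero, sub_self, zero_mul,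
      add_zero]
  have hms : MeasurableSet (univ ×ˢ Icc a T : Set (V × ℝ)) :=
    MeasurableSet.univ.prod measurableSet_Icc
  have hint : IntegrableOn g' (univ ×ˢ Icc a T) :=
    (integrableOn_truncatedHeatBall hr hrt hT.2 hcont).of_forall_sdiff_eq_zero hms hzero
  rw [← setIntegral_eq_of_subset_of_forall_sdiff_eq_zero hms hsub hzero]
  refine (setIntegral_univ_prod_Icc_of_hasDerivAt hT.1
    (fun y t ht => (hderiv y t ht).differentiableAt.hasDerivAt)
    (fun y => hcont.comp (by fun_prop) fun t ht => ⟨mem_univ _, hmem t ht⟩) hint).trans ?_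
  refine integral_congr_ae (Eventually.of_forall fun y => ?_)
  simp only [heatBallDensity_of_nonpos (heatBallPotential_nonpos (x₀ := x₀) hr
    (le_refl (y, a).2)), sub_zero]

theorem setIntegral_heatBallPotential_nonneg_green (hF : ContDiffOn ℝ 2 F (univ ×ˢ Ioi 0)) {t : ℝ}
    (ht : t ∈ Ioo 0 t₀) :
    ∫ y in {y | 0 ≤ heatBallPotential x₀ t₀ r (y, t)},
      ((exp (heatBallPotential x₀ t₀ r (y, t)) - 1 - heatBallPotential x₀ t₀ r (y, t))
          * Δ (fun y => F (y, t)) y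
        - F (y, t) * Δ (fun y => exp (heatBallPotential x₀ t₀ r (y, t)) - 1
            - heatBallPotential x₀ t₀ r (y, t)) y) = 0 := by
  obtain ⟨R, hball, hsphere⟩ :=
    setOf_heatBallPotential_nonneg_eq_closedBall (x₀ := x₀) (r := r) ht.2
  have hψ : ContDiff ℝ 2 fun y => heatBallPotential x₀ t₀ r (y, t) :=
    contDiff_heatBallPotential_slice (m := 2) ht.2
  have hv : ContDiff ℝ 2 fun y => exp (heatBallPotential x₀ t₀ r (y, t)) - 1
      - heatBallPotential x₀ t₀ r (y, t) := (hψ.exp.sub contDiff_const).sub hψ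
  have hu : ContDiff ℝ 2 fun y => F (y, t) := contDiff_slice_space (m := 2) hF ht.1
  have hint {g : V → ℝ} (hg : Continuous g) : IntegrableOn g (Metric.closedBall x₀ R) :=
    hg.continuousOn.integrableOn_compact (isCompact_closedBall x₀ R)
  rw [hball]
  refine (integral_sub (hint (hv.continuous.mul (continuous_laplacian hu)))
    (hint (hu.continuous.mul (continuous_laplacian hv)))).trans (sub_eq_zero.2 ?_)
  refine setIntegral_closedBall_mul_laplacian hv hu (fun y hy => by simp [hsphere y hy])
    fun y hy => ?_
  have hd := (hasDerivAt_exp_sub_one_sub (heatBallPotential x₀ t₀ r (y, t))).comp_hasFDerivAt y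
    (hψ.differentiable two_ne_zero y).hasFDerivAt
  rw [hsphere y hy, exp_zero, sub_self, zero_smul] at hd
  exact hd.fderiv

theorem integral_heatBallDensity (hr : 0 < r) (hrt : r ^ 2 < 4 * π * t₀)
    (hT : T ∈ Ico (t₀ - r ^ 2 / (4 * π)) t₀) (hF : ContDiffOn ℝ 2 F (univ ×ˢ Ioi 0)) :
    ∫ y, heatBallDensity x₀ t₀ r F (y, T)
      = (∫ p in truncatedHeatBall x₀ t₀ r T,
          ‖∇ (fun y => heatBallPotential x₀ t₀ r (y, p.2)) p.1‖ ^ 2 * F p)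
        + ∫ p in truncatedHeatBall x₀ t₀ r T, heatBallDensity x₀ t₀ r (heatOperator F) p := by
  have hK : MeasurableSet (truncatedHeatBall x₀ t₀ r T) :=
    (isCompact_truncatedHeatBall hr hrt hT.2).measurableSet
  have hgrad := integrableOn_norm_sq_gradient_mul (x₀ := x₀) hr hrt hT.2 hF.continuousOn
  have hheat := integrableOn_heatBallDensity (x₀ := x₀) hr hrt hT.2 (continuousOn_heatOperator hF)
  have hderiv := integrableOn_truncatedHeatBall (x₀ := x₀) hr hrt hT.2
    (continuousOn_deriv_heatBallDensity (x₀ := x₀) (t₀ := t₀) (r := r) (hF.of_le one_le_two))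
  rw [← setIntegral_truncatedHeatBall_deriv_heatBallDensity hr hrt hT (hF.of_le one_le_two),
    ← integral_add hgrad hheat]
  refine sub_eq_zero.1 ((integral_sub hderiv (hgrad.add hheat)).symm.trans ?_)
  refine setIntegral_eq_zero_of_forall_slice hK (hderiv.sub (hgrad.add hheat)) fun t => ?_
  by_cases ht : t ∈ Ioo 0 t₀ ∧ t ≤ T
  · have hslice : {y | (y, t) ∈ truncatedHeatBall x₀ t₀ r T}
        = {y | 0 ≤ heatBallPotential x₀ t₀ r (y, t)} :=
      ext fun y => ⟨fun hy => hy.1.2.2, fun hy => ⟨⟨ht.1.1, ht.1.2, hy⟩, ht.2⟩⟩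
    rw [← setIntegral_heatBallPotential_nonneg_green (x₀ := x₀) (r := r) hF ht.1, ← hslice]
    refine setIntegral_congr_fun (measurable_prodMk_right hK) fun y hy => ?_
    exact sub_eq_iff_eq_add'.2 (deriv_heatBallDensity_of_mem_heatBall hF hy.1)
  · have hslice : {y | (y, t) ∈ truncatedHeatBall x₀ t₀ r T} = ∅ :=
      eq_empty_of_forall_notMem fun y hy => ht ⟨⟨hy.1.1, hy.1.2.1⟩, hy.2⟩
    rw [hslice, setIntegral_empty]

end HeatBallIdentity

section HeatKernelScaling

variable {V : Type*} [NormedAddCommGroup V] [InnerProductSpace ℝ V]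

theorem logHeatKernel_smul (x : V) {s t : ℝ} (hs : s ≠ 0) (ht : t ≠ 0) :
    logHeatKernel (s • x, s ^ 2 * t) = logHeatKernel (x, t) - Module.finrank ℝ V * log s := by
  have hlog : log (4 * π * (s ^ 2 * t)) = log (4 * π * t) + 2 * log s := by
    rw [mul_left_comm, log_mul (by positivity) (by positivity), log_pow, add_comm]
    norm_num
  simp only [logHeatKernel, hlog, norm_smul, mul_pow, norm_eq_abs, sq_abs]
  field_simp
  ring

variable [FiniteDimensional ℝ V] [MeasurableSpace V] [BorelSpace V]

theorem integral_heatKernel {t : ℝ} (ht : 0 < t) : ∫ y : V, heatKernel (y, t) = 1 := by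
  have hexp (y : V) : heatKernel (y, t)
      = (4 * π * t) ^ (-(Module.finrank ℝ V / 2 : ℝ)) * exp (-(4 * t)⁻¹ * ‖y‖ ^ 2) := by
    rw [heatKernel, logHeatKernel, rpow_def_of_pos (by positivity), ← exp_add]
    congr 1
    ring
  have hscale : π / (4 * t)⁻¹ = 4 * π * t := by
    rw [div_inv_eq_mul]
    ring
  simp_rw [hexp]
  rw [integral_const_mul, GaussianFourier.integral_rexp_neg_mul_sq_norm (by positivity), hscale,
    ← rpow_add (by positivity), neg_add_cancel, rpow_zero]

theorem integrable_heatKernel {t : ℝ} (ht : 0 < t) : Integrable fun y : V => heatKernel (y, t) :=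
  Integrable.of_integral_ne_zero ((integral_heatKernel ht).trans_ne one_ne_zero)

end HeatKernelScaling

section Concentration

variable {V : Type*} [NormedAddCommGroup V] [InnerProductSpace ℝ V]

/-- The function `r ^ (-d) ω(ψ_r) F` at time `t₀ - s ^ 2`, in the parabolically rescaled space
variable `ξ = (y - x₀) / s` and multiplied by the Jacobian `s ^ d`. -/
noncomputable def rescaledHeatBallDensity (x₀ : V) (t₀ r : ℝ) (F : V × ℝ → ℝ) (s : ℝ) (ξ : V) : ℝ :=
  exp (-(Module.finrank ℝ V * log (r / s)))
    * heatBallWeight (logHeatKernel (ξ, 1) + Module.finrank ℝ V * log (r / s))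
    * F (x₀ + s • ξ, t₀ - s ^ 2)

variable {x₀ : V} {t₀ r s : ℝ} {F : V × ℝ → ℝ}

theorem heatBallPotential_add_smul (hr : 0 < r) (hs : 0 < s) (ξ : V) :
    heatBallPotential x₀ t₀ r (x₀ + s • ξ, t₀ - s ^ 2)
      = logHeatKernel (ξ, 1) + Module.finrank ℝ V * log (r / s) := by
  have h := logHeatKernel_smul ξ hs.ne' one_ne_zero
  rw [mul_one] at h
  rw [heatBallPotential, add_sub_cancel_left, sub_sub_cancel, h, log_div hr.ne' hs.ne']
  ring

theorem rescaledHeatBallDensity_eq (hr : 0 < r) (hs : 0 < s) (ξ : V) :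
    rescaledHeatBallDensity x₀ t₀ r F s ξ
      = r ^ (-(Module.finrank ℝ V : ℝ)) * s ^ Module.finrank ℝ V
        * heatBallDensity x₀ t₀ r F (x₀ + s • ξ, t₀ - s ^ 2) := by
  have hexp : exp (-(Module.finrank ℝ V * log (r / s)))
      = r ^ (-(Module.finrank ℝ V : ℝ)) * s ^ Module.finrank ℝ V := by
    rw [log_div hr.ne' hs.ne', rpow_def_of_pos hr, ← exp_log (pow_pos hs _), log_pow, ← exp_add]
    congr 1
    ring
  rw [rescaledHeatBallDensity, ← heatBallPotential_add_smul hr hs, hexp, mul_assoc, heatBallDensity]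

theorem continuous_rescaledHeatBallDensity (hs : 0 < t₀ - s ^ 2)
    (hF : ContinuousOn F (univ ×ˢ Ioi 0)) : Continuous (rescaledHeatBallDensity x₀ t₀ r F s) := by
  have hk : Continuous fun ξ : V => logHeatKernel (ξ, 1) :=
    (contDiff_logHeatKernel_slice (m := 0) one_ne_zero).continuous
  have hFs : Continuous fun ξ => F (x₀ + s • ξ, t₀ - s ^ 2) :=
    hF.comp_continuous (by fun_prop) fun _ => ⟨mem_univ _, hs⟩
  exact (continuous_const.mul
    (continuous_heatBallWeight.comp (hk.add continuous_const))).mul hFs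

variable [FiniteDimensional ℝ V]

theorem tendsto_rescaledHeatBallDensity [Nontrivial V] (hr : 0 < r) (ht₀ : 0 < t₀)
    (hF : ContinuousOn F (univ ×ˢ Ioi 0)) (ξ : V) :
    Tendsto (fun s => rescaledHeatBallDensity x₀ t₀ r F s ξ) (𝓝[>] 0)
      (𝓝 (heatKernel (ξ, 1) * F (x₀, t₀))) := by
  have hL : Tendsto (fun s => Module.finrank ℝ V * log (r / s)) (𝓝[>] 0) atTop :=
    (tendsto_log_atTop.comp (tendsto_inv_nhdsGT_zero.const_mul_atTop hr)).const_mul_atTop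
      (Nat.cast_pos.2 Module.finrank_pos)
  have hpath : Continuous fun s : ℝ => (x₀ + s • ξ, t₀ - s ^ 2) := by fun_prop
  have hlim := (hpath.tendsto 0).mono_left (nhdsWithin_le_nhds (s := Ioi 0))
  simp only [zero_smul, add_zero, zero_pow two_ne_zero, sub_zero] at hlim
  exact ((tendsto_exp_neg_mul_heatBallWeight _).comp hL).mul
    ((hF.continuousAt (prod_mem_nhds univ_mem (Ioi_mem_nhds ht₀))).tendsto.comp hlim)

theorem exists_norm_rescaledHeatBallDensity_le [Nontrivial V] (hr : 0 < r)
    (hrt : r ^ 2 < 4 * π * t₀) (hF : ContinuousOn F (univ ×ˢ Ioi 0)) :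
    ∃ C, ∀ s > 0, ∀ ξ, ‖rescaledHeatBallDensity x₀ t₀ r F s ξ‖ ≤ heatKernel (ξ, 1) * C := by
  obtain ⟨C, hC⟩ := isCompact_heatCylinder.exists_bound_of_continuousOn
    (hF.mono (heatCylinder_subset (x₀ := x₀) hrt))
  refine ⟨max C 0, fun s hs ξ => ?_⟩
  rcases le_or_gt (heatBallPotential x₀ t₀ r (x₀ + s • ξ, t₀ - s ^ 2)) 0 with hψ | hψ
  · rw [rescaledHeatBallDensity_eq hr hs, heatBallDensity_of_nonpos hψ, mul_zero, norm_zero]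
    exact mul_nonneg (heatKernel_pos _).le (le_max_right C 0)
  · rw [rescaledHeatBallDensity, norm_mul,
      norm_of_nonneg (mul_nonneg (exp_pos _).le (heatBallWeight_nonneg _))]
    exact mul_le_mul (exp_neg_mul_heatBallWeight_le _ _)
      ((hC _ (mem_heatCylinder hr (sub_lt_self t₀ (pow_pos hs 2)) hψ.le)).trans (le_max_left C 0))
      (norm_nonneg _) (heatKernel_pos _).le

variable [MeasurableSpace V] [BorelSpace V]

theorem integral_rescaledHeatBallDensity (hr : 0 < r) (hs : 0 < s) :
    ∫ ξ, rescaledHeatBallDensity x₀ t₀ r F s ξ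
      = r ^ (-(Module.finrank ℝ V : ℝ)) * ∫ y, heatBallDensity x₀ t₀ r F (y, t₀ - s ^ 2) := by
  simp only [rescaledHeatBallDensity_eq hr hs, integral_const_mul]
  rw [Measure.integral_comp_smul volume fun y => heatBallDensity x₀ t₀ r F (x₀ + y, t₀ - s ^ 2),
    abs_of_pos (by positivity), smul_eq_mul, mul_assoc, mul_inv_cancel_left₀ (by positivity),
    integral_add_left_eq_self fun y => heatBallDensity x₀ t₀ r F (y, t₀ - s ^ 2)]

theorem tendsto_integral_rescaledHeatBallDensity [Nontrivial V] (hr : 0 < r)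
    (hrt : r ^ 2 < 4 * π * t₀) (hF : ContinuousOn F (univ ×ˢ Ioi 0)) :
    Tendsto (fun s => ∫ ξ, rescaledHeatBallDensity x₀ t₀ r F s ξ) (𝓝[>] 0) (𝓝 (F (x₀, t₀))) := by
  have ht₀ : 0 < t₀ := pos_of_mul_pos_right ((sq_nonneg r).trans_lt hrt) (by positivity)
  have hpos : ∀ᶠ s in 𝓝[>] (0 : ℝ), 0 < t₀ - s ^ 2 :=
    nhdsWithin_le_nhds ((continuous_const.sub (continuous_pow 2)).continuousAt.eventually
      (lt_mem_nhds (by simpa using ht₀)))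
  obtain ⟨C, hC⟩ := exists_norm_rescaledHeatBallDensity_le (x₀ := x₀) hr hrt hF
  have hlim := tendsto_integral_filter_of_dominated_convergence _
    (hpos.mono fun s hs => (continuous_rescaledHeatBallDensity hs hF).aestronglyMeasurable)
    (eventually_mem_nhdsWithin.mono fun s hs => ae_of_all _ (hC s hs))
    ((integrable_heatKernel one_pos).mul_const C)
    (ae_of_all _ (tendsto_rescaledHeatBallDensity hr ht₀ hF))
  rwa [integral_mul_const, integral_heatKernel one_pos, one_mul] at hlim

theorem tendsto_rpow_mul_integral_heatBallDensity [Nontrivial V] (hr : 0 < r)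
    (hrt : r ^ 2 < 4 * π * t₀) (hF : ContinuousOn F (univ ×ˢ Ioi 0)) :
    Tendsto (fun T => r ^ (-(Module.finrank ℝ V : ℝ)) * ∫ y, heatBallDensity x₀ t₀ r F (y, T))
      (𝓝[<] t₀) (𝓝 (F (x₀, t₀))) := by
  have hsqrt : Tendsto (fun T => √(t₀ - T)) (𝓝[<] t₀) (𝓝[>] 0) := by
    refine tendsto_nhdsWithin_iff.2 ⟨?_, eventually_mem_nhdsWithin.mono fun T hT =>
      sqrt_pos.2 (sub_pos.2 hT)⟩
    have hcont : Continuous fun T => √(t₀ - T) := by fun_prop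
    simpa using (hcont.tendsto t₀).mono_left nhdsWithin_le_nhds
  refine ((tendsto_integral_rescaledHeatBallDensity hr hrt hF).comp hsqrt).congr'
    (eventually_mem_nhdsWithin.mono fun T hT => ?_)
  have hτ : 0 < t₀ - T := sub_pos.2 hT
  rw [Function.comp, integral_rescaledHeatBallDensity hr (sqrt_pos.2 hτ), sq_sqrt hτ.le,
    sub_sub_cancel]

end Concentration

section HeatBallEnergy

variable {V : Type*} [NormedAddCommGroup V] [InnerProductSpace ℝ V] [MeasurableSpace V]
  [BorelSpace V] {x₀ : V} {t₀ r : ℝ} {F : V × ℝ → ℝ}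

theorem measurableSet_heatBall : MeasurableSet (heatBall x₀ t₀ r) := by
  have hψ : Measurable (heatBallPotential x₀ t₀ r) := by
    unfold heatBallPotential logHeatKernel
    fun_prop
  exact (measurableSet_lt measurable_const measurable_snd).inter
    ((measurableSet_lt measurable_snd measurable_const).inter
      (measurableSet_le measurable_const hψ))

variable [FiniteDimensional ℝ V]

/-- The scale-normalized integral of `F` over the heat ball of radius `r` against the weight
`‖∇ψ_r‖²`. -/
noncomputable def heatBallEnergy (x₀ : V) (t₀ : ℝ) (F : V × ℝ → ℝ) (r : ℝ) : ℝ :=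
  r ^ (-(Module.finrank ℝ V : ℝ)) * ∫ p in heatBall x₀ t₀ r,
    ‖∇ (fun y => heatBallPotential x₀ t₀ r (y, p.2)) p.1‖ ^ 2 * F p

theorem aecover_truncatedHeatBall :
    AECover (volume.restrict (heatBall x₀ t₀ r)) (𝓝[<] t₀) (truncatedHeatBall x₀ t₀ r) where
  ae_eventually_mem := ae_restrict_of_forall_mem measurableSet_heatBall fun _ hp =>
    nhdsWithin_le_nhds ((lt_mem_nhds hp.2.1).mono fun _ hT => ⟨hp, hT.le⟩)
  measurableSet _ :=
    measurableSet_heatBall.inter (measurableSet_le measurable_snd measurable_const)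

theorem restrict_heatBall_restrict_truncatedHeatBall (T : ℝ) :
    (volume.restrict (heatBall x₀ t₀ r)).restrict (truncatedHeatBall x₀ t₀ r T)
      = volume.restrict (truncatedHeatBall x₀ t₀ r T) :=
  Measure.restrict_restrict_of_subset (sep_subset _ _)

theorem eventually_mem_Ico_sub_sq_div (hr : 0 < r) :
    ∀ᶠ T in 𝓝[<] t₀, T ∈ Ico (t₀ - r ^ 2 / (4 * π)) t₀ :=
  Ico_mem_nhdsLT (sub_lt_self t₀ (by positivity))

variable [Nontrivial V]

theorem integrableOn_norm_sq_gradient_heatBallPotential (hr : 0 < r)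
    (hrt : r ^ 2 < 4 * π * t₀) :
    IntegrableOn (fun p => ‖∇ (fun y => heatBallPotential x₀ t₀ r (y, p.2)) p.1‖ ^ 2)
      (heatBall x₀ t₀ r) := by
  have hcoe : Tendsto ((↑) : Iio t₀ → ℝ) atTop (𝓝[<] t₀) := (map_coe_Iio_atTop t₀).le
  have hcover : AECover (volume.restrict (heatBall x₀ t₀ r)) atTop
      fun T : Iio t₀ => truncatedHeatBall x₀ t₀ r T :=
    ⟨aecover_truncatedHeatBall.1.mono fun _ hp => hcoe.eventually hp,
      fun T => aecover_truncatedHeatBall.2 T⟩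
  have hone : ContDiffOn ℝ 2 (fun _ : V × ℝ => (1 : ℝ)) (univ ×ˢ Ioi 0) := contDiffOn_const
  have hheat : heatOperator (fun _ : V × ℝ => (1 : ℝ)) = 0 := by
    ext p
    simp [heatOperator, laplacian_const]
  have hlim : Tendsto (fun T => ∫ y, heatBallDensity x₀ t₀ r (fun _ => 1) (y, T)) (𝓝[<] t₀)
      (𝓝 ((r ^ (-(Module.finrank ℝ V : ℝ)))⁻¹ * 1)) := by
    have h := (tendsto_rpow_mul_integral_heatBallDensity (x₀ := x₀) hr hrt
      hone.continuousOn).const_mul (r ^ (-(Module.finrank ℝ V : ℝ)))⁻¹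
    simpa only [inv_mul_cancel_left₀ (rpow_pos_of_pos hr _).ne'] using h
  refine hcover.integrable_of_integral_tendsto_of_nonneg_ae _ (fun T => ?_)
    (ae_of_all _ fun p => sq_nonneg _) ((hlim.comp hcoe).congr' ?_)
  · have h := integrableOn_norm_sq_gradient_mul (x₀ := x₀) hr hrt T.2 hone.continuousOn
    simp only [mul_one] at h
    rwa [IntegrableOn, restrict_heatBall_restrict_truncatedHeatBall]
  · filter_upwards [hcoe.eventually (eventually_mem_Ico_sub_sq_div hr)] with T hT
    rw [restrict_heatBall_restrict_truncatedHeatBall, Function.comp,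
      integral_heatBallDensity hr hrt hT hone, hheat]
    simp [heatBallDensity]

theorem integrableOn_heatBall_norm_sq_gradient_mul (hr : 0 < r) (hrt : r ^ 2 < 4 * π * t₀)
    (hF : ContinuousOn F (univ ×ˢ Ioi 0)) :
    IntegrableOn (fun p => ‖∇ (fun y => heatBallPotential x₀ t₀ r (y, p.2)) p.1‖ ^ 2 * F p)
      (heatBall x₀ t₀ r) := by
  obtain ⟨C, hC⟩ := isCompact_heatCylinder.exists_bound_of_continuousOn
    (hF.mono (heatCylinder_subset (x₀ := x₀) hrt))
  refine (integrableOn_norm_sq_gradient_heatBallPotential hr hrt).mul_bdd (c := C) ?_ ?_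
  · exact (hF.mono fun _ hp => ⟨mem_univ _, hp.1⟩).aestronglyMeasurable measurableSet_heatBall
  · exact ae_restrict_of_forall_mem measurableSet_heatBall fun p hp =>
      hC p (mem_heatCylinder hr hp.2.1 hp.2.2)

theorem tendsto_setIntegral_truncatedHeatBall_heatOperator (hr : 0 < r) (hrt : r ^ 2 < 4 * π * t₀)
    (hF : ContDiffOn ℝ 2 F (univ ×ˢ Ioi 0)) :
    Tendsto (fun T => r ^ (-(Module.finrank ℝ V : ℝ))
        * ∫ p in truncatedHeatBall x₀ t₀ r T, heatBallDensity x₀ t₀ r (heatOperator F) p)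
      (𝓝[<] t₀) (𝓝 (F (x₀, t₀) - heatBallEnergy x₀ t₀ F r)) := by
  have henergy := (aecover_truncatedHeatBall.integral_tendsto_of_countably_generated
    (integrableOn_heatBall_norm_sq_gradient_mul (x₀ := x₀) hr hrt hF.continuousOn)).const_mul
      (r ^ (-(Module.finrank ℝ V : ℝ)))
  simp only [restrict_heatBall_restrict_truncatedHeatBall] at henergy
  refine ((tendsto_rpow_mul_integral_heatBallDensity hr hrt hF.continuousOn).sub
    henergy).congr' ?_
  filter_upwards [eventually_mem_Ico_sub_sq_div hr] with T hT
  rw [integral_heatBallDensity hr hrt hT hF, mul_add, add_sub_cancel_left]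

theorem heatBallEnergy_le (hr : 0 < r) (hrt : r ^ 2 < 4 * π * t₀)
    (hF : ContDiffOn ℝ 2 F (univ ×ˢ Ioi 0)) (hsub : ∀ p, 0 < p.2 → 0 ≤ heatOperator F p) :
    heatBallEnergy x₀ t₀ F r ≤ F (x₀, t₀) := by
  refine sub_nonneg.1 (ge_of_tendsto'
    (tendsto_setIntegral_truncatedHeatBall_heatOperator hr hrt hF) fun T => ?_)
  have hK : MeasurableSet (truncatedHeatBall x₀ t₀ r T) := aecover_truncatedHeatBall.2 T
  exact mul_nonneg (by positivity) (setIntegral_nonneg hK fun p hp =>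
    mul_nonneg (heatBallWeight_nonneg _) (hsub p hp.1.1))

theorem rpow_mul_setIntegral_truncatedHeatBall_mono {r₁ r₂ T : ℝ} (hr₁ : 0 < r₁) (h : r₁ ≤ r₂)
    (hrt : r₂ ^ 2 < 4 * π * t₀) (hT : T < t₀) (hF : ContinuousOn F (univ ×ˢ Ioi 0))
    (hnn : ∀ p, 0 < p.2 → 0 ≤ F p) :
    r₁ ^ (-(Module.finrank ℝ V : ℝ))
        * ∫ p in truncatedHeatBall x₀ t₀ r₁ T, heatBallDensity x₀ t₀ r₁ F p
      ≤ r₂ ^ (-(Module.finrank ℝ V : ℝ))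
        * ∫ p in truncatedHeatBall x₀ t₀ r₂ T, heatBallDensity x₀ t₀ r₂ F p := by
  have hr₂ : 0 < r₂ := hr₁.trans_le h
  have hrt₁ : r₁ ^ 2 < 4 * π * t₀ := lt_of_le_of_lt (by gcongr) hrt
  have hball : truncatedHeatBall x₀ t₀ r₁ T ⊆ truncatedHeatBall x₀ t₀ r₂ T :=
    truncatedHeatBall_mono hr₁ h T
  have hint := (integrableOn_heatBallDensity (x₀ := x₀) hr₂ hrt hT hF).const_mul
    (r₂ ^ (-(Module.finrank ℝ V : ℝ)))
  rw [← integral_const_mul, ← integral_const_mul]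
  calc ∫ p in truncatedHeatBall x₀ t₀ r₁ T,
        r₁ ^ (-(Module.finrank ℝ V : ℝ)) * heatBallDensity x₀ t₀ r₁ F p
      ≤ ∫ p in truncatedHeatBall x₀ t₀ r₁ T,
        r₂ ^ (-(Module.finrank ℝ V : ℝ)) * heatBallDensity x₀ t₀ r₂ F p := by
        refine setIntegral_mono_on ((integrableOn_heatBallDensity hr₁ hrt₁ hT hF).const_mul _)
          (hint.mono_measure (Measure.restrict_mono_set _ hball))
          (aecover_truncatedHeatBall.2 T) fun p hp => ?_
        simp only [heatBallDensity, ← mul_assoc]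
        exact mul_le_mul_of_nonneg_right (rpow_mul_heatBallWeight_mono hr₁ h p) (hnn p hp.1.1)
    _ ≤ ∫ p in truncatedHeatBall x₀ t₀ r₂ T,
        r₂ ^ (-(Module.finrank ℝ V : ℝ)) * heatBallDensity x₀ t₀ r₂ F p :=
        setIntegral_mono_set hint (ae_restrict_of_forall_mem (aecover_truncatedHeatBall.2 T)
          fun p hp => mul_nonneg (by positivity)
            (mul_nonneg (heatBallWeight_nonneg _) (hnn p hp.1.1))) hball.eventuallyLE

theorem heatBallEnergy_anti {r₁ r₂ : ℝ} (hr₁ : 0 < r₁) (h : r₁ ≤ r₂)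
    (hrt : r₂ ^ 2 < 4 * π * t₀) (hF : ContDiffOn ℝ 2 F (univ ×ˢ Ioi 0))
    (hsub : ∀ p, 0 < p.2 → 0 ≤ heatOperator F p) :
    heatBallEnergy x₀ t₀ F r₂ ≤ heatBallEnergy x₀ t₀ F r₁ := by
  have hrt₁ : r₁ ^ 2 < 4 * π * t₀ := lt_of_le_of_lt (by gcongr) hrt
  exact (sub_le_sub_iff_left (F (x₀, t₀))).1 (le_of_tendsto_of_tendsto
    (tendsto_setIntegral_truncatedHeatBall_heatOperator hr₁ hrt₁ hF)
    (tendsto_setIntegral_truncatedHeatBall_heatOperator (hr₁.trans_le h) hrt hF)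
    (eventually_mem_nhdsWithin.mono fun T hT => rpow_mul_setIntegral_truncatedHeatBall_mono hr₁ h
      hrt hT (continuousOn_heatOperator hF) hsub))

end HeatBallEnergy

section EuclideanSpace

variable {n : ℕ} {u₀ : EuclideanSpace ℝ (Fin n) → ℝ}

theorem lap_eq_laplacian {f : EuclideanSpace ℝ (Fin n) → ℝ} {y : EuclideanSpace ℝ (Fin n)}
    (hf : ContDiffAt ℝ 2 f y) : lap f y = Δ f y := by
  rw [laplacian_eq_sum_fderiv_fderiv (EuclideanSpace.basisFun (Fin n) ℝ) hf]
  simp only [EuclideanSpace.basisFun_apply]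
  rfl

theorem heatK_eq_heatKernel (x y : EuclideanSpace ℝ (Fin n)) {t : ℝ} (ht : 0 < t) :
    heatK n x y t = heatKernel (x - y, t) := by
  rw [heatK, heatKernel, logHeatKernel, rpow_def_of_pos (by positivity), ← exp_add,
    finrank_euclideanSpace_fin]
  congr 1
  ring

theorem integral_heatK_mul (y : EuclideanSpace ℝ (Fin n)) {t : ℝ} (ht : 0 < t) :
    ∫ z, heatK n y z t * u₀ z = heatFlow u₀ (y, t) := by
  simp only [heatK_eq_heatKernel _ _ ht, heatFlow, smul_eq_mul]

theorem liYau_eq_lap (hf : Continuous u₀) (hfs : HasCompactSupport u₀) (hnn : ∀ z, 0 ≤ u₀ z)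
    (hne : u₀ ≠ 0) (y : EuclideanSpace ℝ (Fin n)) {t : ℝ} (ht : 0 < t) :
    t ^ 2 * heatFlow u₀ (y, t) * (lap (fun z => log (heatFlow u₀ (z, t))) y + n / (2 * t))
      = liYau u₀ (y, t) := by
  have hlog : ContDiff ℝ 2 fun z => log (heatFlow u₀ (z, t)) :=
    (contDiff_slice_space (m := 2) (contDiffOn_heatFlow hf hfs) ht).log
      fun z => (heatFlow_pos hf hfs hnn hne ht).ne'
  rw [lap_eq_laplacian hlog.contDiffAt, ← sq_mul_laplacian_log_heatFlow hf hfs hnn hne y ht,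
    finrank_euclideanSpace_fin]

theorem log_heatK_add_log_eq_heatBallPotential (x₀ y : EuclideanSpace ℝ (Fin n)) (r : ℝ)
    {t t₀ : ℝ} (ht : t < t₀) :
    log (heatK n x₀ y (t₀ - t)) + n * log r = heatBallPotential x₀ t₀ r (y, t) := by
  rw [heatK_eq_heatKernel _ _ (sub_pos.2 ht), heatKernel, log_exp, heatBallPotential,
    logHeatKernel, logHeatKernel, norm_sub_rev, finrank_euclideanSpace_fin]

theorem setOf_rpow_le_heatK_eq_heatBall (x₀ : EuclideanSpace ℝ (Fin n)) (t₀ : ℝ) {r : ℝ}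
    (hr : 0 < r) :
    {p : EuclideanSpace ℝ (Fin n) × ℝ |
        0 < p.2 ∧ p.2 < t₀ ∧ r ^ (-(n : ℝ)) ≤ heatK n x₀ p.1 (t₀ - p.2)}
      = heatBall x₀ t₀ r := by
  ext p
  refine and_congr_right fun _ => and_congr_right fun hp => ?_
  have hpos : 0 < heatK n x₀ p.1 (t₀ - p.2) :=
    heatK_eq_heatKernel x₀ p.1 (sub_pos.2 hp) ▸ heatKernel_pos _
  rw [← log_heatK_add_log_eq_heatBallPotential x₀ p.1 r hp, ← log_le_log_iff (by positivity) hpos,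
    log_rpow hr, neg_mul, neg_le_iff_add_nonneg]

theorem setIntegral_norm_sq_gradient_log_heatK_mul (x₀ : EuclideanSpace ℝ (Fin n)) (t₀ r : ℝ)
    {F G : EuclideanSpace ℝ (Fin n) × ℝ → ℝ} (hFG : ∀ p, 0 < p.2 → F p = G p) :
    ∫ p in heatBall x₀ t₀ r,
        ‖gradient (fun z => log (heatK n x₀ z (t₀ - p.2)) + n * log r) p.1‖ ^ 2 * F p
      = ∫ p in heatBall x₀ t₀ r,
        ‖∇ (fun y => heatBallPotential x₀ t₀ r (y, p.2)) p.1‖ ^ 2 * G p :=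
  setIntegral_congr_fun measurableSet_heatBall fun p hp => by
    simp only [log_heatK_add_log_eq_heatBallPotential x₀ _ r hp.2.1, hFG p hp.1]

end EuclideanSpace

/-- Localized Li–Yau monotonicity (Example 3 of Section 5 of the paper) on ℝⁿ:
with `Q = t² u (Δ log u + n/(2t))` and `I(r) = r^{-n} ∫_{E_r} ‖∇ψ_r‖² Q`, the
function `I` is nonincreasing and `t₀² u(Δ log u + n/(2t₀))(x₀,t₀) ≥ I(r₂)`. -/
theorem stmt14 (n : ℕ) (hn : 1 ≤ n)
    (u₀ : EuclideanSpace ℝ (Fin n) → ℝ) (hc : Continuous u₀)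
    (hsupp : HasCompactSupport u₀) (hnn : ∀ z, 0 ≤ u₀ z) (hne : ∃ z, u₀ z ≠ 0)
    (u : EuclideanSpace ℝ (Fin n) → ℝ → ℝ)
    (hu : ∀ y t, u y t = ∫ z, heatK n y z t * u₀ z)
    (x₀ : EuclideanSpace ℝ (Fin n)) (t₀ : ℝ) (ht₀ : 0 < t₀)
    (hatH : EuclideanSpace ℝ (Fin n) → ℝ → ℝ)
    (hhatH : ∀ y t, hatH y t
      = (4 * π * (t₀ - t)) ^ (-(n : ℝ) / 2)
          * Real.exp (-‖x₀ - y‖ ^ 2 / (4 * (t₀ - t))))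
    (E : ℝ → Set ((EuclideanSpace ℝ (Fin n)) × ℝ))
    (hE : ∀ r, E r
      = {p | 0 < p.2 ∧ p.2 < t₀ ∧ (r : ℝ) ^ (-(n : ℝ)) ≤ hatH p.1 p.2})
    (Q : EuclideanSpace ℝ (Fin n) → ℝ → ℝ)
    (hQ : ∀ y t, Q y t
      = t ^ 2 * u y t * (lap (fun z => Real.log (u z t)) y + n / (2 * t)))
    (I : ℝ → ℝ)
    (hI : ∀ r, I r = r ^ (-(n : ℝ)) * ∫ p in E r,
      ‖gradient (fun z => Real.log (hatH z p.2) + n * Real.log r) p.1‖ ^ 2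
        * Q p.1 p.2) :
    ∀ r₁ r₂ : ℝ, 0 < r₁ → r₁ ≤ r₂ → r₂ ^ 2 < 4 * π * t₀ →
      I r₂ ≤ I r₁
      ∧ I r₂ ≤ t₀ ^ 2 * u x₀ t₀
          * (lap (fun z => Real.log (u z t₀)) x₀ + n / (2 * t₀)) := by
  intro r₁ r₂ hr₁ h hrt
  have hr₂ : 0 < r₂ := hr₁.trans_le h
  have : Nonempty (Fin n) := ⟨⟨0, hn⟩⟩
  have hne₀ : u₀ ≠ 0 := Function.ne_iff.2 hne
  have hhatH' : hatH = fun y t => heatK n x₀ y (t₀ - t) := funext₂ hhatH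
  have hQ' (y : EuclideanSpace ℝ (Fin n)) (t : ℝ) (ht : 0 < t) : Q y t = liYau u₀ (y, t) := by
    simp only [hQ, hu, integral_heatK_mul _ ht, liYau_eq_lap hc hsupp hnn hne₀ y ht]
  have hI' (r : ℝ) (hr : 0 < r) : I r = heatBallEnergy x₀ t₀ (liYau u₀) r := by
    rw [hI, hE, hhatH', setOf_rpow_le_heatK_eq_heatBall x₀ t₀ hr, heatBallEnergy,
      finrank_euclideanSpace_fin,
      setIntegral_norm_sq_gradient_log_heatK_mul x₀ t₀ r fun p hp => hQ' p.1 p.2 hp]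
  have hsmooth : ContDiffOn ℝ 2 (liYau u₀) (univ ×ˢ Ioi 0) :=
    contDiffOn_liYau (m := 2) hc hsupp hnn hne₀
  have hsub : ∀ p, 0 < p.2 → 0 ≤ heatOperator (liYau u₀) p := fun _ hp =>
    heatOperator_liYau_nonneg hc hsupp hnn hne₀ hp
  rw [hI' r₁ hr₁, hI' r₂ hr₂, ← hQ, hQ' x₀ t₀ ht₀]
  exact ⟨heatBallEnergy_anti hr₁ h hrt hsmooth hsub, heatBallEnergy_le hr₂ hrt hsmooth hsub⟩
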